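/- arXiv:2502.20221 — 3 statements merged into one kernel-verified Lean document; each statement's English description precedes it below -/
import Mathlib

section
/- Suppose k is continuous on [a,b]×[a,b] and g ∈ C([a,b]), and that both coefficient matrices I_n − V_n^SE and E_n^RZ − V_n^RZ are invertible. Let v_N^SE be Stenger's SE-Sinc-collocation solution and w_N^RZ the Rashidinia–Zarebnia SE-Sinc-collocation solution. Then v_N^SE(t_i^SE) = w_N^RZ(t_i^SE) for every i ∈ {−N, −N+1, …, N}. -/
/-!
Everything reduces to a factorization of the Rashidinia–Zarebnia system. Because
`φ(t_i) = i h` and `S(j,h)(i h)` is the Kronecker delta, the operator `P_N^SE` interpolates at the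
collocation points, so Stenger's solution takes the value `u_N^SE(t_i)` there, which equals `u_i` by
the linear system (`PNSE_tSE`, `uNSEf_tSE`). For the same reason `w_N^RZ(t_i) = (E_n^RZ c)_i`
(`wRZf_tSE`).

Since `J(j,h)(i h) = h δ_{i-j}^{(-1)}`, applying `V_N^SE` to a function and sampling at the
collocation points is multiplication by the matrix `V_n^SE`; columnwise this gives
`V_n^RZ = V_n^SE E_n^RZ` (`VnRZ_eq_mul`). Hence `(E_n^RZ - V_n^RZ) c = (1 - V_n^SE) (E_n^RZ c)`, and
invertibility of `1 - V_n^SE` forces `E_n^RZ c = u`.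
-/

namespace SincVolterra

noncomputable section

/-- The sine integral `Si(x) = ∫₀ˣ (sin τ)/τ dτ`. -/
def Si (x : ℝ) : ℝ := ∫ τ in (0:ℝ)..x, Real.sin τ / τ

/-- The Sinc function `S(j,h)(x)`. -/
def sincF (j : ℤ) (h x : ℝ) : ℝ :=
  if x = (j : ℝ) * h then 1
  else Real.sin (Real.pi * (x - (j : ℝ) * h) / h) / (Real.pi * (x - (j : ℝ) * h) / h)

/-- `J(j,h)(x) = h (1/2 + (1/π) Si(π(x - jh)/h))`. -/
def Jfun (j : ℤ) (h x : ℝ) : ℝ :=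
  h * (1/2 + (1/Real.pi) * Si (Real.pi * (x - (j : ℝ) * h) / h))

/-- The tanh (SE) transformation. -/
def psiSE (a b x : ℝ) : ℝ := (b - a)/2 * Real.tanh (x/2) + (b + a)/2

/-- The inverse of the SE transformation. -/
def phiSE (a b t : ℝ) : ℝ := Real.log ((t - a)/(b - t))

/-- The double-exponential (DE) transformation. -/
def psiDE (a b x : ℝ) : ℝ := (b - a)/2 * Real.tanh (Real.pi/2 * Real.sinh x) + (b + a)/2

/-- The inverse of the DE transformation. -/
def phiDE (a b t : ℝ) : ℝ := Real.arsinh (1/Real.pi * Real.log ((t - a)/(b - t)))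

/-- The SE transformation as a complex map. -/
def psiSEC (a b : ℝ) (z : ℂ) : ℂ :=
  (((b : ℂ) - (a : ℂ))/2) * Complex.tanh (z/2) + ((b : ℂ) + (a : ℂ))/2

/-- The DE transformation as a complex map. -/
def psiDEC (a b : ℝ) (z : ℂ) : ℂ :=
  (((b : ℂ) - (a : ℂ))/2) * Complex.tanh (((Real.pi : ℂ))/2 * Complex.sinh z) + ((b : ℂ) + (a : ℂ))/2

/-- The strip `D_d = {ζ : |Im ζ| < d}`. -/
def Dstrip (d : ℝ) : Set ℂ := {z : ℂ | |z.im| < d}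

/-- `D = ψ^SE(D_d)`. -/
def DSE (a b d : ℝ) : Set ℂ := psiSEC a b '' Dstrip d

def omA (a b t : ℝ) : ℝ := (b - t)/(b - a)

def omB (a b t : ℝ) : ℝ := (t - a)/(b - a)

/-- The SE collocation points `t_j^SE = ψ^SE(jh)`. -/
def tSE (a b h : ℝ) (j : ℤ) : ℝ := psiSE a b ((j : ℝ) * h)

/-- The DE collocation points `t_j^DE = ψ^DE(jh)`. -/
def tDE (a b h : ℝ) (j : ℤ) : ℝ := psiDE a b ((j : ℝ) * h)

/-- `δ_m^{(-1)} = 1/2 + (1/π) Si(π m)`. -/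
def deltaM (m : ℤ) : ℝ := 1/2 + (1/Real.pi) * Si (Real.pi * (m : ℝ))

/-- `J(j,h)(φ^SE(t))`, extended continuously to `t = a` (value 0) and `t = b` (value h). -/
def JSEext (a b h : ℝ) (j : ℤ) (t : ℝ) : ℝ :=
  if t ≤ a then 0 else if b ≤ t then h else Jfun j h (phiSE a b t)

/-- `J(j,h)(φ^DE(t))`, extended continuously to `t = a` (value 0) and `t = b` (value h). -/
def JDEext (a b h : ℝ) (j : ℤ) (t : ℝ) : ℝ :=
  if t ≤ a then 0 else if b ≤ t then h else Jfun j h (phiDE a b t)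

/-- The operator `V_N^SE`, with the continuous extension to `t = a, b` built in. -/
def VNSE (a b h : ℝ) (N : ℕ) (k : ℝ → ℝ → ℂ) (f : ℝ → ℂ) (t : ℝ) : ℂ :=
  ∑ j ∈ Finset.Icc (-(N:ℤ)) (N:ℤ),
    k t (tSE a b h j) * f (tSE a b h j) * ((deriv (psiSE a b) ((j : ℝ) * h) : ℝ) : ℂ)
      * ((JSEext a b h j t : ℝ) : ℂ)

/-- The operator `V_N^DE`, with the continuous extension to `t = a, b` built in. -/
def VNDE (a b h : ℝ) (N : ℕ) (k : ℝ → ℝ → ℂ) (f : ℝ → ℂ) (t : ℝ) : ℂ :=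
  ∑ j ∈ Finset.Icc (-(N:ℤ)) (N:ℤ),
    k t (tDE a b h j) * f (tDE a b h j) * ((deriv (psiDE a b) ((j : ℝ) * h) : ℝ) : ℂ)
      * ((JDEext a b h j t : ℝ) : ℂ)

/-- The generalized SE-Sinc approximation operator `P_N^SE`. -/
def PNSE (a b h : ℝ) (N : ℕ) (f : ℝ → ℂ) (t : ℝ) : ℂ :=
  if t ≤ a then f (tSE a b h (-(N:ℤ)))
  else if b ≤ t then f (tSE a b h (N:ℤ))
  else f (tSE a b h (-(N:ℤ))) * ((omA a b t : ℝ) : ℂ) + f (tSE a b h (N:ℤ)) * ((omB a b t : ℝ) : ℂ)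
    + ∑ j ∈ Finset.Icc (-(N:ℤ)) (N:ℤ),
        (f (tSE a b h j) - f (tSE a b h (-(N:ℤ))) * ((omA a b (tSE a b h j) : ℝ) : ℂ)
          - f (tSE a b h (N:ℤ)) * ((omB a b (tSE a b h j) : ℝ) : ℂ))
          * ((sincF j h (phiSE a b t) : ℝ) : ℂ)

/-- The generalized DE-Sinc approximation operator `P_N^DE`. -/
def PNDE (a b h : ℝ) (N : ℕ) (f : ℝ → ℂ) (t : ℝ) : ℂ :=
  if t ≤ a then f (tDE a b h (-(N:ℤ)))
  else if b ≤ t then f (tDE a b h (N:ℤ))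
  else f (tDE a b h (-(N:ℤ))) * ((omA a b t : ℝ) : ℂ) + f (tDE a b h (N:ℤ)) * ((omB a b t : ℝ) : ℂ)
    + ∑ j ∈ Finset.Icc (-(N:ℤ)) (N:ℤ),
        (f (tDE a b h j) - f (tDE a b h (-(N:ℤ))) * ((omA a b (tDE a b h j) : ℝ) : ℂ)
          - f (tDE a b h (N:ℤ)) * ((omB a b (tDE a b h j) : ℝ) : ℂ))
          * ((sincF j h (phiDE a b t) : ℝ) : ℂ)

/-- `Δ_N = ω_a(t_{-N})ω_b(t_N) - ω_b(t_{-N})ω_a(t_N)`. -/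
def DeltaN (a b h : ℝ) (N : ℕ) : ℝ :=
  omA a b (tSE a b h (-(N:ℤ))) * omB a b (tSE a b h (N:ℤ))
    - omB a b (tSE a b h (-(N:ℤ))) * omA a b (tSE a b h (N:ℤ))

def betaN (a b h : ℝ) (N : ℕ) (f : ℝ → ℂ) : ℂ :=
  (f (tSE a b h (-(N:ℤ))) * ((omB a b (tSE a b h (N:ℤ)) : ℝ) : ℂ)
    - f (tSE a b h (N:ℤ)) * ((omB a b (tSE a b h (-(N:ℤ))) : ℝ) : ℂ)) / ((DeltaN a b h N : ℝ) : ℂ)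

def gammaN (a b h : ℝ) (N : ℕ) (f : ℝ → ℂ) : ℂ :=
  (f (tSE a b h (N:ℤ)) * ((omA a b (tSE a b h (-(N:ℤ))) : ℝ) : ℂ)
    - f (tSE a b h (-(N:ℤ))) * ((omA a b (tSE a b h (N:ℤ)) : ℝ) : ℂ)) / ((DeltaN a b h N : ℝ) : ℂ)

/-- The Rashidinia–Zarebnia interpolation operator `P_N^RZ`. -/
def PNRZ (a b h : ℝ) (N : ℕ) (f : ℝ → ℂ) (t : ℝ) : ℂ :=
  if t ≤ a then betaN a b h N f
  else if b ≤ t then gammaN a b h N f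
  else betaN a b h N f * ((omA a b t : ℝ) : ℂ) + gammaN a b h N f * ((omB a b t : ℝ) : ℂ)
    + ∑ j ∈ Finset.Icc (-(N:ℤ)+1) ((N:ℤ)-1),
        (f (tSE a b h j) - betaN a b h N f * ((omA a b (tSE a b h j) : ℝ) : ℂ)
          - gammaN a b h N f * ((omB a b (tSE a b h j) : ℝ) : ℂ))
          * ((sincF j h (phiSE a b t) : ℝ) : ℂ)

/-- Reindexing `Fin (2N+1)` as `{-N, …, N}`. -/
def zidx (N : ℕ) (i : Fin (2*N+1)) : ℤ := ((i : ℕ) : ℤ) - (N : ℤ)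

/-- The matrix `V_n^SE`. -/
def VnSE (a b h : ℝ) (N : ℕ) (k : ℝ → ℝ → ℂ) : Matrix (Fin (2*N+1)) (Fin (2*N+1)) ℂ :=
  Matrix.of fun i j =>
    k (tSE a b h (zidx N i)) (tSE a b h (zidx N j))
      * ((deriv (psiSE a b) ((zidx N j : ℝ) * h) : ℝ) : ℂ) * ((h : ℝ) : ℂ)
      * ((deltaM (zidx N i - zidx N j) : ℝ) : ℂ)

/-- The matrix `V_n^DE`. -/
def VnDE (a b h : ℝ) (N : ℕ) (k : ℝ → ℝ → ℂ) : Matrix (Fin (2*N+1)) (Fin (2*N+1)) ℂ :=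
  Matrix.of fun i j =>
    k (tDE a b h (zidx N i)) (tDE a b h (zidx N j))
      * ((deriv (psiDE a b) ((zidx N j : ℝ) * h) : ℝ) : ℂ) * ((h : ℝ) : ℂ)
      * ((deltaM (zidx N i - zidx N j) : ℝ) : ℂ)

/-- The right-hand-side vector `g_n^SE`. -/
def gnSE (a b h : ℝ) (N : ℕ) (g : ℝ → ℂ) : Fin (2*N+1) → ℂ := fun i => g (tSE a b h (zidx N i))

/-- The right-hand-side vector `g_n^DE`. -/
def gnDE (a b h : ℝ) (N : ℕ) (g : ℝ → ℂ) : Fin (2*N+1) → ℂ := fun i => g (tDE a b h (zidx N i))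

/-- The matrix `E_n^RZ`. -/
def EnRZ (a b h : ℝ) (N : ℕ) : Matrix (Fin (2*N+1)) (Fin (2*N+1)) ℂ :=
  Matrix.of fun i j =>
    if (j : ℕ) = 0 then ((omA a b (tSE a b h (zidx N i)) : ℝ) : ℂ)
    else if (j : ℕ) = 2*N then ((omB a b (tSE a b h (zidx N i)) : ℝ) : ℂ)
    else if i = j then 1 else 0

/-- The matrix `V_n^RZ`. -/
def VnRZ (a b h : ℝ) (N : ℕ) (k : ℝ → ℝ → ℂ) : Matrix (Fin (2*N+1)) (Fin (2*N+1)) ℂ :=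
  Matrix.of fun i j =>
    if (j : ℕ) = 0 then VNSE a b h N k (fun t => ((omA a b t : ℝ) : ℂ)) (tSE a b h (zidx N i))
    else if (j : ℕ) = 2*N then VNSE a b h N k (fun t => ((omB a b t : ℝ) : ℂ)) (tSE a b h (zidx N i))
    else k (tSE a b h (zidx N i)) (tSE a b h (zidx N j))
      * ((deriv (psiSE a b) ((zidx N j : ℝ) * h) : ℝ) : ℂ) * ((h : ℝ) : ℂ)
      * ((deltaM (zidx N i - zidx N j) : ℝ) : ℂ)

/-- The SE-Sinc-Nyström solution `u_N^SE` built from a solution vector `u` of the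
linear system, with the continuous extension to the endpoints built in. -/
def uNSEf (a b h : ℝ) (N : ℕ) (k : ℝ → ℝ → ℂ) (g : ℝ → ℂ) (u : Fin (2*N+1) → ℂ) (t : ℝ) : ℂ :=
  g t + ∑ i : Fin (2*N+1),
    k t (tSE a b h (zidx N i)) * u i * ((deriv (psiSE a b) ((zidx N i : ℝ) * h) : ℝ) : ℂ)
      * ((JSEext a b h (zidx N i) t : ℝ) : ℂ)

/-- The DE-Sinc-Nyström solution `u_N^DE` built from a solution vector `u` of the
linear system, with the continuous extension to the endpoints built in. -/
def uNDEf (a b h : ℝ) (N : ℕ) (k : ℝ → ℝ → ℂ) (g : ℝ → ℂ) (u : Fin (2*N+1) → ℂ) (t : ℝ) : ℂ :=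
  g t + ∑ i : Fin (2*N+1),
    k t (tDE a b h (zidx N i)) * u i * ((deriv (psiDE a b) ((zidx N i : ℝ) * h) : ℝ) : ℂ)
      * ((JDEext a b h (zidx N i) t : ℝ) : ℂ)

/-- The Rashidinia–Zarebnia SE-Sinc-collocation solution `w_N^RZ` built from a
coefficient vector `c`, with the continuous extension to the endpoints built in. -/
def wRZf (a b h : ℝ) (N : ℕ) (c : Fin (2*N+1) → ℂ) (t : ℝ) : ℂ :=
  if t ≤ a then c ⟨0, by omega⟩
  else if b ≤ t then c ⟨2*N, by omega⟩
  else c ⟨0, by omega⟩ * ((omA a b t : ℝ) : ℂ) + c ⟨2*N, by omega⟩ * ((omB a b t : ℝ) : ℂ)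
    + ∑ j ∈ Finset.univ.filter (fun j : Fin (2*N+1) => (j : ℕ) ≠ 0 ∧ (j : ℕ) ≠ 2*N),
        c j * ((sincF (zidx N j) h (phiSE a b t) : ℝ) : ℂ)

/-- The SE mesh size `h = √(πd/(αN))`. -/
def hstepSE (α d : ℝ) (N : ℕ) : ℝ := Real.sqrt (Real.pi * d / (α * N))

/-- The DE mesh size `h = log(2dN/α)/N`. -/
def hstepDE (α d : ℝ) (N : ℕ) : ℝ := Real.log (2*d*N/α) / N

/-! ### Transformation and basis functions at the collocation points -/

lemma one_add_tanh (y : ℝ) : 1 + Real.tanh y = Real.exp y / Real.cosh y := by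
  rw [Real.tanh_eq_sinh_div_cosh, ← Real.cosh_add_sinh]
  field_simp [(Real.cosh_pos y).ne']

lemma one_sub_tanh (y : ℝ) : 1 - Real.tanh y = Real.exp (-y) / Real.cosh y := by
  rw [Real.tanh_eq_sinh_div_cosh, ← Real.cosh_sub_sinh]
  field_simp [(Real.cosh_pos y).ne']

lemma psiSE_sub_left (a b x : ℝ) :
    psiSE a b x - a = (b - a) / 2 * (Real.exp (x / 2) / Real.cosh (x / 2)) := by
  rw [← one_add_tanh, psiSE]; ring

lemma sub_psiSE_right (a b x : ℝ) :
    b - psiSE a b x = (b - a) / 2 * (Real.exp (-(x / 2)) / Real.cosh (x / 2)) := by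
  rw [← one_sub_tanh, psiSE]; ring

lemma lt_psiSE {a b : ℝ} (hab : a < b) (x : ℝ) : a < psiSE a b x := by
  rw [← sub_pos, psiSE_sub_left]
  have := sub_pos.2 hab
  have := Real.cosh_pos (x / 2)
  positivity

lemma psiSE_lt {a b : ℝ} (hab : a < b) (x : ℝ) : psiSE a b x < b := by
  rw [← sub_pos, sub_psiSE_right]
  have := sub_pos.2 hab
  have := Real.cosh_pos (x / 2)
  positivity

lemma lt_tSE {a b : ℝ} (hab : a < b) (h : ℝ) (j : ℤ) : a < tSE a b h j := lt_psiSE hab _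

lemma tSE_lt {a b : ℝ} (hab : a < b) (h : ℝ) (j : ℤ) : tSE a b h j < b := psiSE_lt hab _

lemma phiSE_psiSE {a b : ℝ} (hab : a < b) (x : ℝ) : phiSE a b (psiSE a b x) = x := by
  have h1 := sub_pos.2 hab
  have h2 := Real.cosh_pos (x / 2)
  have h3 : (b - a) / 2 * (Real.exp (x / 2) / Real.cosh (x / 2)) /
      ((b - a) / 2 * (Real.exp (-(x / 2)) / Real.cosh (x / 2))) = Real.exp x := by
    have h4 : Real.exp (x / 2) = Real.exp x * Real.exp (-(x / 2)) := by
      rw [← Real.exp_add]; ring_nf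
    rw [h4]
    field_simp [h1.ne']
  rw [phiSE, psiSE_sub_left, sub_psiSE_right, h3, Real.log_exp]

lemma sincF_mul {h : ℝ} (hh : 0 < h) (i j : ℤ) :
    sincF j h ((i : ℝ) * h) = if i = j then 1 else 0 := by
  unfold sincF
  by_cases hij : i = j
  · simp [hij]
  · have hne : ¬ ((i : ℝ) * h = (j : ℝ) * h) := fun e =>
      hij (by exact_mod_cast mul_right_cancel₀ hh.ne' e)
    have harg : Real.pi * ((i : ℝ) * h - (j : ℝ) * h) / h = ((i - j : ℤ) : ℝ) * Real.pi := by
      push_cast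
      field_simp
    rw [if_neg hne, if_neg hij, harg, Real.sin_int_mul_pi, zero_div]

lemma JSEext_tSE {a b h : ℝ} (hab : a < b) (hh : 0 < h) (i j : ℤ) :
    JSEext a b h j (tSE a b h i) = h * deltaM (i - j) := by
  have harg : Real.pi * ((i : ℝ) * h - (j : ℝ) * h) / h = Real.pi * ((i - j : ℤ) : ℝ) := by
    push_cast
    field_simp
  rw [JSEext, if_neg (lt_tSE hab _ _).not_ge, if_neg (tSE_lt hab _ _).not_ge, tSE,
    phiSE_psiSE hab, Jfun, harg, deltaM]

lemma zidx_injective (N : ℕ) : Function.Injective (zidx N) := by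
  intro i j hij
  unfold zidx at hij
  exact Fin.ext (by omega)

lemma exists_zidx {N : ℕ} {i : ℤ} (hi : i ∈ Finset.Icc (-(N : ℤ)) (N : ℤ)) :
    ∃ m : Fin (2 * N + 1), zidx N m = i := by
  rw [Finset.mem_Icc] at hi
  exact ⟨⟨(i + N).toNat, by omega⟩, by simp only [zidx]; omega⟩

lemma sum_Icc_eq_sum_zidx (N : ℕ) (F : ℤ → ℂ) :
    ∑ j ∈ Finset.Icc (-(N : ℤ)) (N : ℤ), F j = ∑ m : Fin (2 * N + 1), F (zidx N m) := by
  symm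
  refine Finset.sum_bij (fun m _ => zidx N m) ?_ ?_ ?_ ?_
  · intro m _
    have := m.2
    simp only [zidx, Finset.mem_Icc]
    omega
  · intro m _ l _ e
    exact zidx_injective N e
  · intro i hi
    obtain ⟨m, hm⟩ := exists_zidx hi
    exact ⟨m, Finset.mem_univ _, hm⟩
  · intros
    rfl

/-! ### Values of the two solutions and the factorization of the second system -/

/-- `P_N^SE` interpolates at the collocation points. -/
lemma PNSE_tSE {a b h : ℝ} (hab : a < b) (hh : 0 < h) {N : ℕ} (f : ℝ → ℂ) {i : ℤ}
    (hi : i ∈ Finset.Icc (-(N : ℤ)) (N : ℤ)) :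
    PNSE a b h N f (tSE a b h i) = f (tSE a b h i) := by
  have hphi : phiSE a b (tSE a b h i) = (i : ℝ) * h := phiSE_psiSE hab _
  rw [PNSE, if_neg (lt_tSE hab _ _).not_ge, if_neg (tSE_lt hab _ _).not_ge, hphi,
    Finset.sum_eq_single_of_mem i hi, sincF_mul hh, if_pos rfl]
  · push_cast
    ring
  · intro j _ hj
    rw [sincF_mul hh, if_neg (Ne.symm hj)]
    simp

lemma VNSE_tSE {a b h : ℝ} (hab : a < b) (hh : 0 < h) (N : ℕ) (k : ℝ → ℝ → ℂ) (f : ℝ → ℂ)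
    (m : Fin (2 * N + 1)) :
    VNSE a b h N k f (tSE a b h (zidx N m)) =
      ∑ l, VnSE a b h N k m l * f (tSE a b h (zidx N l)) := by
  rw [VNSE, sum_Icc_eq_sum_zidx]
  refine Finset.sum_congr rfl fun l _ => ?_
  rw [JSEext_tSE hab hh, VnSE, Matrix.of_apply]
  push_cast
  ring

lemma uNSEf_tSE {a b h : ℝ} (hab : a < b) (hh : 0 < h) {N : ℕ} {k : ℝ → ℝ → ℂ} {g : ℝ → ℂ}
    {u : Fin (2 * N + 1) → ℂ}
    (hu : Matrix.mulVec (1 - VnSE a b h N k) u = gnSE a b h N g) (m : Fin (2 * N + 1)) :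
    uNSEf a b h N k g u (tSE a b h (zidx N m)) = u m := by
  have hm := congrFun hu m
  rw [Matrix.sub_mulVec, Matrix.one_mulVec, Pi.sub_apply, gnSE] at hm
  rw [uNSEf, ← hm]
  have hsum : ∑ l : Fin (2 * N + 1),
      k (tSE a b h (zidx N m)) (tSE a b h (zidx N l)) * u l
        * ((deriv (psiSE a b) ((zidx N l : ℝ) * h) : ℝ) : ℂ)
        * ((JSEext a b h (zidx N l) (tSE a b h (zidx N m)) : ℝ) : ℂ)
      = Matrix.mulVec (VnSE a b h N k) u m := by
    rw [Matrix.mulVec_eq_sum, Finset.sum_apply]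
    refine Finset.sum_congr rfl fun l _ => ?_
    simp only [Pi.smul_apply, Matrix.transpose_apply, MulOpposite.smul_eq_mul_unop,
      MulOpposite.unop_op]
    rw [JSEext_tSE hab hh, VnSE, Matrix.of_apply]
    push_cast
    ring
  rw [hsum]
  ring

lemma wRZf_tSE {a b h : ℝ} (hab : a < b) {N : ℕ} (hN : 0 < N) (hh : 0 < h)
    (c : Fin (2 * N + 1) → ℂ) (m : Fin (2 * N + 1)) :
    wRZf a b h N c (tSE a b h (zidx N m)) = Matrix.mulVec (EnRZ a b h N) c m := by
  have hphi : phiSE a b (tSE a b h (zidx N m)) = (zidx N m : ℝ) * h := phiSE_psiSE hab _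
  rw [wRZf, if_neg (lt_tSE hab _ _).not_ge, if_neg (tSE_lt hab _ _).not_ge, hphi]
  set p : Fin (2 * N + 1) := ⟨0, by omega⟩ with hp
  set q : Fin (2 * N + 1) := ⟨2 * N, by omega⟩ with hq
  -- The columns `p` and `q` of the matrix sample the two boundary functions; they are distinct as `0 < N`.
  have hpq : p ≠ q := by
    intro e
    have := congrArg Fin.val e
    simp only [hp, hq] at this
    omega
  have hset : Finset.univ.filter (fun j : Fin (2 * N + 1) => (j : ℕ) ≠ 0 ∧ (j : ℕ) ≠ 2 * N)
      = (Finset.univ.erase p).erase q := by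
    ext j
    simp only [Finset.mem_filter, Finset.mem_univ, true_and, Finset.mem_erase, and_true, ne_eq,
      Fin.ext_iff, hp, hq]
    tauto
  have hmul : Matrix.mulVec (EnRZ a b h N) c m = ∑ j, EnRZ a b h N m j * c j := rfl
  rw [hmul, ← Finset.add_sum_erase _ _ (Finset.mem_univ p),
    ← Finset.add_sum_erase _ _ (Finset.mem_erase.2 ⟨hpq.symm, Finset.mem_univ q⟩), hset, ← add_assoc]
  have hEp : EnRZ a b h N m p = ((omA a b (tSE a b h (zidx N m)) : ℝ) : ℂ) := by
    simp [EnRZ, hp]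
  have hEq : EnRZ a b h N m q = ((omB a b (tSE a b h (zidx N m)) : ℝ) : ℂ) := by
    simp [EnRZ, hq, hN.ne']
  rw [hEp, hEq]
  congr 1
  · ring
  · refine Finset.sum_congr rfl fun j hj => ?_
    rw [← hset, Finset.mem_filter] at hj
    rw [sincF_mul hh, EnRZ, Matrix.of_apply, if_neg hj.2.1, if_neg hj.2.2]
    by_cases hmj : m = j
    · simp [hmj]
    · simp [hmj, (zidx_injective N).ne hmj]

lemma VnRZ_eq_mul {a b h : ℝ} (hab : a < b) (hh : 0 < h) (N : ℕ) (k : ℝ → ℝ → ℂ) :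
    VnRZ a b h N k = VnSE a b h N k * EnRZ a b h N := by
  ext m j
  rw [Matrix.mul_apply, VnRZ, Matrix.of_apply]
  by_cases h0 : (j : ℕ) = 0
  · simp only [if_pos h0, EnRZ, Matrix.of_apply]
    exact VNSE_tSE hab hh N k _ m
  by_cases h1 : (j : ℕ) = 2 * N
  · simp only [if_neg h0, if_pos h1, EnRZ, Matrix.of_apply]
    exact VNSE_tSE hab hh N k _ m
  simp only [if_neg h0, if_neg h1, EnRZ, Matrix.of_apply]
  simp [VnSE]

/-- Stenger's solution and the Rashidinia–Zarebnia solution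
coincide at the collocation points. -/
theorem coincide_at_collocation_points
    (a b h : ℝ) (N : ℕ) (hab : a < b) (hN : 0 < N) (hh : 0 < h)
    (k : ℝ → ℝ → ℂ) (g : ℝ → ℂ)
    (hk : ContinuousOn (Function.uncurry k) (Set.Icc a b ×ˢ Set.Icc a b))
    (hg : ContinuousOn g (Set.Icc a b))
    (hinv1 : IsUnit (1 - VnSE a b h N k))
    (hinv2 : IsUnit (EnRZ a b h N - VnRZ a b h N k))
    (u c : Fin (2*N+1) → ℂ)
    (hu : Matrix.mulVec (1 - VnSE a b h N k) u = gnSE a b h N g)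
    (hc : Matrix.mulVec (EnRZ a b h N - VnRZ a b h N k) c = gnSE a b h N g) :
    ∀ i ∈ Finset.Icc (-(N:ℤ)) (N:ℤ),
      PNSE a b h N (uNSEf a b h N k g u) (tSE a b h i) = wRZf a b h N c (tSE a b h i) := by
  -- Invertibility of `1 - V_n^SE` identifies the samples of `w_N^RZ` with `u`.
  have key : Matrix.mulVec (EnRZ a b h N) c = u := by
    apply Matrix.mulVec_injective_of_isUnit hinv1
    rw [hu, ← hc, VnRZ_eq_mul hab hh, Matrix.mulVec_mulVec, Matrix.sub_mul, Matrix.one_mul]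
  intro i hi
  obtain ⟨m, rfl⟩ := exists_zidx hi
  rw [PNSE_tSE hab hh _ hi, uNSEf_tSE hab hh hu, wRZf_tSE hab hN hh, key]

end

end SincVolterra
end

section
/- Let 0 < α ≤ 1, 0 < d < π, and D = ψ^SE(D_d). Suppose: u and g are analytic and bounded on D and possess endpoint values u(a), u(b), g(a), g(b) (limits at a and b); k : D̄ × D̄ → ℂ is bounded on D×D and analytic in each variable separately on D; for every z ∈ D ∪ {b} the straight segment from a to z and the straight segment from z to b lie in D ∪ {a,b}, and u(z) = g(z) + (z−a)·∫₀¹ k(z, a+σ(z−a))·u(a+σ(z−a)) dσ; and there exist a constant L and endpoint values k(a,w), k(b,w) (w ∈ D) such that |g(z) − g(a)| ≤ L|z−a|^α, |g(b) − g(z)| ≤ L|b−z|^α, |k(z,w) − k(a,w)| ≤ L|z−a|^α and |k(b,w) − k(z,w)| ≤ L|b−z|^α for all z, w ∈ D. Then there exists a constant L′ such that |u(z) − u(a)| ≤ L′|z−a|^α and |u(b) − u(z)| ≤ L′|b−z|^α for all z ∈ D; that is, u ∈ M_α(D). -/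
/-!
Write `D = DSE a b d`. Since `psiSEC a b ζ = (a + b w) / (1 + w)` with `w = exp ζ`, the domain `D` is
open (`DSE_isOpen`), bounded (`DSE_norm_le`) and meets the real line inside `(a, b)`
(`DSE_real`). Hence the open segments from a point of `D` to `a` and to `b` stay in `D`.

The Hölder bounds are first shown between `z` and a second point `y` of `D` on the segment from `z`
to the endpoint, uniformly in `y`; letting `y` tend to the endpoint gives the claim. At `a`, the
integral term is at most a constant times `|z - a|`, which is at most a constant times
`|z - a| ^ α` on the bounded set `D`. At `b`, put `H x z = ∫_a^z k(x, w) u(w) dw` and split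
`H y y - H z z = (H y y - H z y) + (H z y - H z z)`. The first difference is controlled by the Hölder
condition on `k` in its first variable. For the second, `H z` is a primitive of `w ↦ k(z, w) u(w)`
on `D` (`hasDerivAt_segment_integral`), so the mean value inequality bounds it by a constant times
`|y - z| ≤ |b - z|`.
-/

namespace SincVolterra

noncomputable section

/-! ### Geometry of the domain -/

lemma normSq_one_add_exp (ζ : ℂ) :
    Complex.normSq (1 + Complex.exp ζ) =
      1 + 2 * Real.exp ζ.re * Real.cos ζ.im + Real.exp ζ.re ^ 2 := by
  rw [Complex.normSq_apply]
  simp only [Complex.add_re, Complex.add_im, Complex.one_re, Complex.one_im,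
    Complex.exp_re, Complex.exp_im]
  nlinarith [Real.sin_sq_add_cos_sq ζ.im]

/-- On the strip the points `-1` and `exp ζ` stay apart, by the law of cosines and
`cos (Im ζ) ≥ cos d`. -/
lemma sin_le_norm_one_add_exp {d : ℝ} (hdpi : d < Real.pi) {ζ : ℂ}
    (hζ : ζ ∈ Dstrip d) :
    Real.sin d ≤ ‖1 + Complex.exp ζ‖ ∧
      Real.sin d * ‖Complex.exp ζ‖ ≤ ‖1 + Complex.exp ζ‖ := by
  have hcos : Real.cos d ≤ Real.cos ζ.im := by
    rw [← Real.cos_abs ζ.im]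
    exact Real.cos_le_cos_of_nonneg_of_le_pi (abs_nonneg _) hdpi.le (le_of_lt hζ)
  have hr : 0 < Real.exp ζ.re := Real.exp_pos _
  have hsq : ‖1 + Complex.exp ζ‖ ^ 2 =
      1 + 2 * Real.exp ζ.re * Real.cos ζ.im + Real.exp ζ.re ^ 2 := by
    rw [← normSq_one_add_exp, Complex.normSq_eq_norm_sq]
  have hm := mul_le_mul_of_nonneg_left hcos hr.le
  constructor
  · apply le_of_sq_le_sq _ (norm_nonneg _)
    nlinarith [Real.sin_sq_add_cos_sq d, sq_nonneg (Real.exp ζ.re + Real.cos d)]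
  · rw [Complex.norm_exp]
    apply le_of_sq_le_sq _ (norm_nonneg _)
    have h1 : Real.sin d ^ 2 = 1 - Real.cos d ^ 2 := by
      linarith [Real.sin_sq_add_cos_sq d]
    rw [hsq, mul_pow, h1]
    nlinarith [sq_nonneg (1 + Real.exp ζ.re * Real.cos d)]

lemma one_add_exp_ne_zero {d : ℝ} (hd : 0 < d) (hdpi : d < Real.pi) {ζ : ℂ}
    (hζ : ζ ∈ Dstrip d) : 1 + Complex.exp ζ ≠ 0 := by
  have h := (sin_le_norm_one_add_exp hdpi hζ).1
  exact norm_pos_iff.mp ((Real.sin_pos_of_pos_of_lt_pi hd hdpi).trans_le h)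

lemma cosh_half_mul (ζ : ℂ) :
    2 * Complex.cosh (ζ / 2) * Complex.exp (ζ / 2) = 1 + Complex.exp ζ := by
  have h1 : Complex.exp ζ = Complex.exp (ζ / 2) * Complex.exp (ζ / 2) := by
    rw [← Complex.exp_add]; congr 1; ring
  rw [Complex.two_cosh, h1, Complex.exp_neg]
  field_simp [Complex.exp_ne_zero]
  ring

lemma cosh_half_ne_zero {d : ℝ} (hd : 0 < d) (hdpi : d < Real.pi) {ζ : ℂ}
    (hζ : ζ ∈ Dstrip d) : Complex.cosh (ζ / 2) ≠ 0 := by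
  intro h
  apply one_add_exp_ne_zero hd hdpi hζ
  rw [← cosh_half_mul, h]; ring

/-- The transformation is the Möbius map `w ↦ (a + b w) / (1 + w)` evaluated at `w = exp ζ`. -/
lemma psiSEC_mul {a b d : ℝ} (hd : 0 < d) (hdpi : d < Real.pi) {ζ : ℂ}
    (hζ : ζ ∈ Dstrip d) :
    (psiSEC a b ζ - a) * (1 + Complex.exp ζ) = (b - a) * Complex.exp ζ ∧
    (b - psiSEC a b ζ) * (1 + Complex.exp ζ) = b - a := by
  have hc := cosh_half_ne_zero hd hdpi hζ
  have hE := Complex.exp_ne_zero (ζ / 2)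
  have h1 : Complex.exp ζ = Complex.exp (ζ / 2) * Complex.exp (ζ / 2) := by
    rw [← Complex.exp_add]; congr 1; ring
  have h2 := cosh_half_mul ζ
  have hs : 2 * Complex.sinh (ζ / 2) * Complex.exp (ζ / 2) = Complex.exp ζ - 1 := by
    rw [Complex.two_sinh, h1, Complex.exp_neg]
    field_simp
  have ht : Complex.tanh (ζ / 2) * (1 + Complex.exp ζ) = Complex.exp ζ - 1 := by
    rw [← h2, ← hs, Complex.tanh_eq_sinh_div_cosh]
    field_simp
  unfold psiSEC
  constructor
  · linear_combination ((b : ℂ) - a) / 2 * ht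
  · linear_combination -(((b : ℂ) - a) / 2 * ht)

lemma DSE_norm_le {a b d : ℝ} (hab : a < b) (hd : 0 < d) (hdpi : d < Real.pi) {z : ℂ}
    (hz : z ∈ DSE a b d) :
    ‖z - a‖ ≤ (b - a) / Real.sin d ∧ ‖b - z‖ ≤ (b - a) / Real.sin d := by
  obtain ⟨ζ, hζ, rfl⟩ := hz
  obtain ⟨h1, h2⟩ := psiSEC_mul (a := a) (b := b) hd hdpi hζ
  obtain ⟨h3, h4⟩ := sin_le_norm_one_add_exp hdpi hζ
  have hs := Real.sin_pos_of_pos_of_lt_pi hd hdpi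
  have hE : 0 < ‖Complex.exp ζ‖ := by rw [Complex.norm_exp]; positivity
  have hba : ‖((b : ℂ) - a)‖ = b - a := by
    rw [← Complex.ofReal_sub, Complex.norm_real, Real.norm_of_nonneg (by linarith)]
  have h1' := congrArg norm h1
  have h2' := congrArg norm h2
  rw [norm_mul, norm_mul, hba] at h1'
  rw [norm_mul, hba] at h2'
  constructor
  · rw [le_div_iff₀ hs]
    have := mul_le_mul_of_nonneg_left h4 (norm_nonneg (psiSEC a b ζ - a))
    rw [h1', ← mul_assoc] at this
    exact le_of_mul_le_mul_right this hE
  · rw [le_div_iff₀ hs]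
    have := mul_le_mul_of_nonneg_left h3 (norm_nonneg (b - psiSEC a b ζ))
    rwa [h2'] at this

lemma DSE_real {a b d : ℝ} (hab : a < b) (hd : 0 < d) (hdpi : d < Real.pi) {x : ℝ}
    (hx : (x : ℂ) ∈ DSE a b d) : a < x ∧ x < b := by
  obtain ⟨ζ, hζ, hx⟩ := hx
  obtain ⟨h1, h2⟩ := psiSEC_mul (a := a) (b := b) hd hdpi hζ
  rw [hx] at h1 h2
  have h3 : ((b - x : ℝ) : ℂ) * Complex.exp ζ = ((x - a : ℝ) : ℂ) := by
    push_cast; linear_combination h2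
  have him := congrArg Complex.im h3
  have hre := congrArg Complex.re h3
  rw [Complex.im_ofReal_mul, Complex.ofReal_im, Complex.exp_im] at him
  rw [Complex.re_ofReal_mul, Complex.ofReal_re, Complex.exp_re] at hre
  have hr : 0 < Real.exp ζ.re := Real.exp_pos _
  have hbx : b - x ≠ 0 := by
    intro h
    rw [h] at hre
    linarith
  have hsin : Real.sin ζ.im = 0 := by
    simpa [hbx, hr.ne'] using him
  have hab' := abs_lt.mp (lt_trans (show |ζ.im| < d from hζ) hdpi)
  have h0 : ζ.im = 0 := (Real.sin_eq_zero_iff_of_lt_of_lt hab'.1 hab'.2).mp hsin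
  rw [h0, Real.cos_zero, mul_one] at hre
  constructor
  · by_contra hlt
    have : 0 < (b - x) * Real.exp ζ.re := mul_pos (by linarith) hr
    linarith
  · by_contra hlt
    have : (b - x) * Real.exp ζ.re ≤ 0 := mul_nonpos_of_nonpos_of_nonneg (by linarith) hr.le
    linarith

/-- `psiSEC a b` has the nonvanishing derivative `(b - a) / (4 cosh² (ζ / 2))` on the strip, so its
image is open. -/
lemma DSE_isOpen {a b d : ℝ} (hab : a < b) (hd : 0 < d) (hdpi : d < Real.pi) :
    IsOpen (DSE a b d) := by
  rw [isOpen_iff_mem_nhds]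
  rintro _ ⟨ζ, hζ, rfl⟩
  have hc := cosh_half_ne_zero hd hdpi hζ
  have hder : HasStrictDerivAt (psiSEC a b)
      ((((b : ℂ) - a) / 2) * (1 / 2 / Complex.cosh (ζ / 2) ^ 2)) ζ := by
    have hh : HasStrictDerivAt (fun z : ℂ => z / 2) (1 / 2) ζ :=
      (hasStrictDerivAt_id ζ).div_const 2
    have ht := ((Complex.hasStrictDerivAt_sinh (ζ / 2)).comp ζ hh).div
      ((Complex.hasStrictDerivAt_cosh (ζ / 2)).comp ζ hh) (by simpa using hc)
    have := (ht.const_mul (((b : ℂ) - a) / 2)).add_const (((b : ℂ) + a) / 2)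
    refine (this.congr_deriv ?_).congr_of_eventuallyEq (Filter.Eventually.of_forall fun z => ?_)
    · congr 2
      simp only [Function.comp]
      linear_combination (1 / 2 : ℂ) * Complex.cosh_sq_sub_sinh_sq (ζ / 2)
    · simp [psiSEC, Complex.tanh_eq_sinh_div_cosh]
  have hne : (((b : ℂ) - a) / 2) * (1 / 2 / Complex.cosh (ζ / 2) ^ 2) ≠ 0 := by
    have : (b : ℂ) - a ≠ 0 := by
      rw [← Complex.ofReal_sub]
      exact_mod_cast (sub_pos.mpr hab).ne'
    simp [this, hc]
  rw [← hder.map_nhds_eq hne, Filter.mem_map]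
  have hopen : IsOpen (Dstrip d) :=
    isOpen_lt (Complex.continuous_im.abs) continuous_const
  exact Filter.mem_of_superset (hopen.mem_nhds hζ) (Set.subset_preimage_image _ _)

/-! ### Primitives on star-shaped domains -/

lemma line_continuousOn {U : Set ℂ} {p z : ℂ}
    (hstar : ∀ σ ∈ Set.Ioc (0:ℝ) 1, p + (σ : ℂ) * (z - p) ∈ U) {f : ℂ → ℂ}
    (hf : ContinuousOn f U) :
    ContinuousOn (fun σ : ℝ => f (p + (σ : ℂ) * (z - p))) (Set.Ioc 0 1) :=
  hf.comp (by fun_prop) hstar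

lemma line_intervalIntegrable {U : Set ℂ} {p z : ℂ}
    (hstar : ∀ σ ∈ Set.Ioc (0:ℝ) 1, p + (σ : ℂ) * (z - p) ∈ U) {f : ℂ → ℂ}
    (hf : ContinuousOn f U) {M : ℝ} (hM : ∀ w ∈ U, ‖f w‖ ≤ M) :
    IntervalIntegrable (fun σ : ℝ => f (p + (σ : ℂ) * (z - p))) MeasureTheory.volume 0 1 := by
  rw [intervalIntegrable_iff, Set.uIoc_of_le zero_le_one]
  refine MeasureTheory.IntegrableOn.of_bound (C := M) (by simp)
    ((line_continuousOn hstar hf).aestronglyMeasurable measurableSet_Ioc) ?_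
  exact (MeasureTheory.ae_restrict_iff' measurableSet_Ioc).mpr
    (Filter.Eventually.of_forall fun σ hσ => hM _ (hstar σ hσ))

/-- Integrating a bounded holomorphic function along segments from `p` gives a primitive, even
when the centre `p` of the star-shaped open set `U` lies on its boundary. Differentiation under
the integral sign is justified by the Cauchy estimate for `z ↦ f (p + σ (z - p))`, which is bounded
by `M` on a fixed ball around `z` for every `σ ∈ (0, 1]`. -/
lemma hasDerivAt_segment_integral {U : Set ℂ} (hU : IsOpen U) {p : ℂ}
    (hstar : ∀ z ∈ U, ∀ σ ∈ Set.Ioc (0:ℝ) 1, p + (σ : ℂ) * (z - p) ∈ U)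
    {f : ℂ → ℂ} (hf : DifferentiableOn ℂ f U) {M : ℝ} (hM : ∀ w ∈ U, ‖f w‖ ≤ M)
    {z : ℂ} (hz : z ∈ U) :
    HasDerivAt (fun z => (z - p) * ∫ σ in (0:ℝ)..1, f (p + (σ : ℂ) * (z - p))) (f z) z := by
  have hM0 : 0 ≤ M := (norm_nonneg _).trans (hM z hz)
  obtain ⟨r, hr, hball⟩ := Metric.isOpen_iff.mp hU z hz
  have hderiv : ∀ x ∈ U, ∀ σ ∈ Set.Ioc (0:ℝ) 1,
      HasDerivAt (fun x => f (p + (σ : ℂ) * (x - p)))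
        ((σ : ℂ) * deriv f (p + (σ : ℂ) * (x - p))) x := by
    intro x hx σ hσ
    have h1 : HasDerivAt f (deriv f (p + (σ : ℂ) * (x - p))) (p + (σ : ℂ) * (x - p)) :=
      (hf.differentiableAt (hU.mem_nhds (hstar x hx σ hσ))).hasDerivAt
    have h2 : HasDerivAt (fun x : ℂ => p + (σ : ℂ) * (x - p)) (σ : ℂ) x := by
      simpa using (((hasDerivAt_id x).sub_const p).const_mul (σ : ℂ)).const_add p
    exact (h1.comp x h2).congr_deriv (mul_comm _ _)
  have hbound : ∀ x ∈ Metric.ball z (r / 2), ∀ σ ∈ Set.Ioc (0:ℝ) 1,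
      ‖(σ : ℂ) * deriv f (p + (σ : ℂ) * (x - p))‖ ≤ M / (r / 4) := by
    intro x hx σ hσ
    have hsub : Metric.closedBall x (r / 4) ⊆ U := by
      intro y hy
      apply hball
      rw [Metric.mem_ball] at hx ⊢
      rw [Metric.mem_closedBall] at hy
      linarith [dist_triangle y x z]
    have hxU : x ∈ U := hsub (Metric.mem_closedBall_self (by positivity))
    rw [← (hderiv x hxU σ hσ).deriv]
    apply Complex.norm_deriv_le_of_forall_mem_sphere_norm_le (by positivity)
    · apply DifferentiableOn.diffContOnCl
      intro y hy
      exact (hderiv y (hsub (Metric.closure_ball_subset_closedBall hy)) σ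
        hσ).differentiableAt.differentiableWithinAt
    · intro y hy
      exact hM _ (hstar y (hsub (Metric.sphere_subset_closedBall hy)) σ hσ)
  have hdc : ContinuousOn (deriv f) U := (hf.deriv hU).continuousOn
  have hF'c : ContinuousOn (fun σ : ℝ => (σ : ℂ) * deriv f (p + (σ : ℂ) * (z - p)))
      (Set.Ioc 0 1) :=
    (by fun_prop : ContinuousOn (fun σ : ℝ => (σ : ℂ)) (Set.Ioc 0 1)).mul
      (line_continuousOn (hstar z hz) hdc)
  have hint := line_intervalIntegrable (hstar z hz) hf.continuousOn hM
  obtain ⟨hint', hI⟩ := intervalIntegral.hasDerivAt_integral_of_dominated_loc_of_deriv_le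
    (μ := MeasureTheory.volume) (a := 0) (b := 1) (bound := fun _ => M / (r / 4))
    (F := fun x (σ : ℝ) => f (p + (σ : ℂ) * (x - p)))
    (F' := fun x (σ : ℝ) => (σ : ℂ) * deriv f (p + (σ : ℂ) * (x - p)))
    (x₀ := z) (s := Metric.ball z (r / 2)) (Metric.ball_mem_nhds z (by positivity))
    (by
      filter_upwards [hU.mem_nhds hz] with x hx
      rw [Set.uIoc_of_le zero_le_one]
      exact (line_continuousOn (hstar x hx) hf.continuousOn).aestronglyMeasurable
        measurableSet_Ioc)
    hint
    (by
      rw [Set.uIoc_of_le zero_le_one]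
      exact hF'c.aestronglyMeasurable measurableSet_Ioc)
    (by
      rw [Set.uIoc_of_le zero_le_one]
      exact Filter.Eventually.of_forall fun σ hσ x hx => hbound x hx σ hσ)
    (by simp)
    (by
      rw [Set.uIoc_of_le zero_le_one]
      refine Filter.Eventually.of_forall fun σ hσ x hx => hderiv x (hball ?_) σ hσ
      exact Metric.ball_subset_ball (by linarith) hx)
  have hmul := ((hasDerivAt_id z).sub_const p).mul hI
  -- The derivative of `σ ↦ σ f (p + σ (z - p))` is the integrand of the resulting derivative.
  have hftc : ∫ σ in (0:ℝ)..1, (f (p + (σ : ℂ) * (z - p)) +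
      (z - p) * ((σ : ℂ) * deriv f (p + (σ : ℂ) * (z - p)))) = f z := by
    have hcont : ContinuousOn (fun σ : ℝ => (σ : ℂ) * f (p + (σ : ℂ) * (z - p)))
        (Set.Icc 0 1) := by
      intro σ hσ
      rcases hσ.1.eq_or_lt with h0 | h0
      · subst h0
        -- At `σ = 0` the factor `f` may be discontinuous, but it is bounded.
        have hsq : Filter.Tendsto (fun σ : ℝ => |σ| * max M ‖f p‖)
            (nhdsWithin 0 (Set.Icc 0 1)) (nhds 0) := by
          have : Continuous (fun σ : ℝ => |σ| * max M ‖f p‖) := by fun_prop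
          simpa using (this.tendsto 0).mono_left nhdsWithin_le_nhds
        have : Filter.Tendsto (fun σ : ℝ => (σ : ℂ) * f (p + (σ : ℂ) * (z - p)))
            (nhdsWithin 0 (Set.Icc 0 1)) (nhds 0) := by
          apply squeeze_zero_norm' _ hsq
          filter_upwards [self_mem_nhdsWithin] with s hs
          rw [norm_mul, Complex.norm_real, Real.norm_eq_abs]
          apply mul_le_mul_of_nonneg_left _ (abs_nonneg s)
          rcases hs.1.eq_or_lt with h | h
          · subst h; simp
          · exact (hM _ (hstar z hz s ⟨h, hs.2⟩)).trans (le_max_left _ _)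
        simpa [ContinuousWithinAt] using this
      · have h1 : ContinuousAt f (p + (σ : ℂ) * (z - p)) :=
          (hf.differentiableAt (hU.mem_nhds (hstar z hz σ ⟨h0, hσ.2⟩))).continuousAt
        have h2 : ContinuousAt (fun σ : ℝ => f (p + (σ : ℂ) * (z - p))) σ :=
          ContinuousAt.comp (f := fun σ : ℝ => p + (σ : ℂ) * (z - p)) h1 (by fun_prop)
        have h3 : ContinuousAt (fun σ : ℝ => (σ : ℂ)) σ := by fun_prop
        exact (h3.mul h2).continuousWithinAt
    rw [intervalIntegral.integral_eq_sub_of_hasDerivAt_of_le zero_le_one hcont _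
      (hint.add (hint'.const_mul _))]
    · simp
    · intro σ hσ
      have h1 : HasDerivAt f (deriv f (p + (σ : ℂ) * (z - p))) (p + (σ : ℂ) * (z - p)) :=
        (hf.differentiableAt (hU.mem_nhds (hstar z hz σ ⟨hσ.1, hσ.2.le⟩))).hasDerivAt
      have h3 : HasDerivAt (fun σ : ℝ => (σ : ℂ)) 1 σ := Complex.ofRealCLM.hasDerivAt
      have h2 : HasDerivAt (fun σ : ℝ => p + (σ : ℂ) * (z - p)) (z - p) σ := by
        simpa using (h3.mul_const (z - p)).const_add p
      have h4 := h3.mul (h1.comp σ h2)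
      refine h4.congr_deriv ?_
      simp only [Function.comp]
      ring
  rw [intervalIntegral.integral_add hint (hint'.const_mul _),
    intervalIntegral.integral_const_mul] at hftc
  refine hmul.congr_deriv ?_
  rw [← hftc]
  simp

/-! ### Hölder bounds for the solution -/

/-- the solution of the Volterra equation inherits the Hölder
continuity at the endpoints, i.e. `u ∈ M_α(D)`. -/
theorem solution_in_Malpha
    (a b α d : ℝ) (hab : a < b) (hα : 0 < α) (hα1 : α ≤ 1)
    (hd : 0 < d) (hdpi : d < Real.pi)
    (u g : ℂ → ℂ) (k : ℂ → ℂ → ℂ)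
    (hu_an : DifferentiableOn ℂ u (DSE a b d))
    (hu_bd : ∃ M : ℝ, ∀ z ∈ DSE a b d, ‖u z‖ ≤ M)
    (hu_lima : Filter.Tendsto u (nhdsWithin (a : ℂ) (DSE a b d)) (nhds (u (a : ℂ))))
    (hu_limb : Filter.Tendsto u (nhdsWithin (b : ℂ) (DSE a b d)) (nhds (u (b : ℂ))))
    (hg_an : DifferentiableOn ℂ g (DSE a b d))
    (hg_bd : ∃ M : ℝ, ∀ z ∈ DSE a b d, ‖g z‖ ≤ M)
    (hg_lima : Filter.Tendsto g (nhdsWithin (a : ℂ) (DSE a b d)) (nhds (g (a : ℂ))))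
    (hg_limb : Filter.Tendsto g (nhdsWithin (b : ℂ) (DSE a b d)) (nhds (g (b : ℂ))))
    (hk_bd : ∃ M : ℝ, ∀ z ∈ DSE a b d, ∀ w ∈ DSE a b d, ‖k z w‖ ≤ M)
    (hk_an1 : ∀ w ∈ DSE a b d, DifferentiableOn ℂ (fun z => k z w) (DSE a b d))
    (hk_an2 : ∀ z ∈ DSE a b d, DifferentiableOn ℂ (fun w => k z w) (DSE a b d))
    (hseg : ∀ z ∈ DSE a b d ∪ {((b : ℝ) : ℂ)},
      (∀ σ ∈ Set.Icc (0:ℝ) 1, (a : ℂ) + (σ : ℂ) * (z - (a : ℂ)) ∈ DSE a b d ∪ {((a : ℝ) : ℂ), ((b : ℝ) : ℂ)}) ∧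
      (∀ σ ∈ Set.Icc (0:ℝ) 1, z + (σ : ℂ) * ((b : ℂ) - z) ∈ DSE a b d ∪ {((a : ℝ) : ℂ), ((b : ℝ) : ℂ)}))
    (heq : ∀ z ∈ DSE a b d ∪ {((b : ℝ) : ℂ)},
      u z = g z + (z - (a : ℂ)) *
        ∫ σ in (0:ℝ)..1, k z ((a : ℂ) + (σ : ℂ) * (z - (a : ℂ))) * u ((a : ℂ) + (σ : ℂ) * (z - (a : ℂ))))
    (hHolder : ∃ L : ℝ, ∀ z ∈ DSE a b d,
      ‖g z - g (a : ℂ)‖ ≤ L * ‖z - (a : ℂ)‖ ^ α ∧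
      ‖g (b : ℂ) - g z‖ ≤ L * ‖(b : ℂ) - z‖ ^ α ∧
      ∀ w ∈ DSE a b d,
        ‖k z w - k (a : ℂ) w‖ ≤ L * ‖z - (a : ℂ)‖ ^ α ∧
        ‖k (b : ℂ) w - k z w‖ ≤ L * ‖(b : ℂ) - z‖ ^ α) :
    ∃ L' : ℝ, ∀ z ∈ DSE a b d,
      ‖u z - u (a : ℂ)‖ ≤ L' * ‖z - (a : ℂ)‖ ^ α ∧
      ‖u (b : ℂ) - u z‖ ≤ L' * ‖(b : ℂ) - z‖ ^ α := by
  obtain ⟨Mu, hMu⟩ := hu_bd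
  obtain ⟨Mk, hMk⟩ := hk_bd
  obtain ⟨L₀, hL₀⟩ := hHolder
  have hopen : IsOpen (DSE a b d) := DSE_isOpen hab hd hdpi
  have hreal : ∀ x : ℝ, (x : ℂ) ∈ DSE a b d → a < x ∧ x < b := fun x hx => DSE_real hab hd hdpi hx
  -- The segments meet the endpoints only at their ends, because `D ∩ ℝ ⊆ (a, b)`.
  have hstara : ∀ z ∈ DSE a b d, ∀ σ ∈ Set.Ioc (0:ℝ) 1,
      (a : ℂ) + (σ : ℂ) * (z - (a : ℂ)) ∈ DSE a b d := by
    intro z hz σ hσ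
    have hσ0 : (σ : ℂ) ≠ 0 := by exact_mod_cast hσ.1.ne'
    rcases (hseg z (Or.inl hz)).1 σ ⟨hσ.1.le, hσ.2⟩ with h | h | h
    · exact h
    · exfalso
      have hza : z = ((a : ℝ) : ℂ) := by
        have : (σ : ℂ) * (z - a) = 0 := by linear_combination h
        exact sub_eq_zero.mp ((mul_eq_zero.mp this).resolve_left hσ0)
      rw [hza] at hz
      exact lt_irrefl _ (hreal a hz).1
    · exfalso
      have hzb : z = ((a + (b - a) / σ : ℝ) : ℂ) := by
        have h' : (a : ℂ) + (σ : ℂ) * (z - a) = b := h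
        push_cast
        field_simp
        linear_combination h'
      rw [hzb] at hz
      have h1 := (hreal _ hz).2
      have h2 : b - a ≤ (b - a) / σ := by
        rw [le_div_iff₀ hσ.1]
        nlinarith [hσ.2]
      linarith
  have hstarb : ∀ z ∈ DSE a b d, ∀ σ ∈ Set.Ico (0:ℝ) 1,
      z + (σ : ℂ) * ((b : ℂ) - z) ∈ DSE a b d := by
    intro z hz σ hσ
    have hσ1 : 0 < 1 - σ := by linarith [hσ.2]
    have hσ0 : (1 - (σ : ℂ)) ≠ 0 := by exact_mod_cast hσ1.ne'
    rcases (hseg z (Or.inl hz)).2 σ ⟨hσ.1, hσ.2.le⟩ with h | h | h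
    · exact h
    · exfalso
      have hza : z = ((b - (b - a) / (1 - σ) : ℝ) : ℂ) := by
        have h' : z + (σ : ℂ) * ((b : ℂ) - z) = a := h
        push_cast
        field_simp
        linear_combination h'
      rw [hza] at hz
      have h1 := (hreal _ hz).1
      have h2 : b - a ≤ (b - a) / (1 - σ) := by
        rw [le_div_iff₀ hσ1]
        nlinarith [hσ.1]
      linarith
    · exfalso
      have hzb : z = ((b : ℝ) : ℂ) := by
        have h' : z + (σ : ℂ) * ((b : ℂ) - z) = b := h
        have : (1 - (σ : ℂ)) * (z - b) = 0 := by linear_combination h'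
        exact sub_eq_zero.mp ((mul_eq_zero.mp this).resolve_left hσ0)
      rw [hzb] at hz
      exact lt_irrefl _ (hreal b hz).2
  set B : ℝ := (b - a) / Real.sin d with hB
  have hB0 : 0 ≤ B :=
    div_nonneg (by linarith) (Real.sin_pos_of_pos_of_lt_pi hd hdpi).le
  have hDB : ∀ z ∈ DSE a b d, ‖z - (a : ℂ)‖ ≤ B ∧ ‖(b : ℂ) - z‖ ≤ B :=
    fun z hz => DSE_norm_le hab hd hdpi hz
  set C : ℝ := B ^ (1 - α) with hC
  have hpow : ∀ x : ℝ, 0 ≤ x → x ≤ B → x ≤ C * x ^ α := by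
    intro x hx hxB
    calc x = x ^ (1 - α) * x ^ α := by
          rw [← Real.rpow_add_of_nonneg hx (by linarith) hα.le]; simp
      _ ≤ C * x ^ α := by
          apply mul_le_mul_of_nonneg_right _ (Real.rpow_nonneg hx _)
          exact Real.rpow_le_rpow hx hxB (by linarith)
  set L : ℝ := |L₀| with hLdef
  have hL0 : 0 ≤ L := abs_nonneg _
  have hup : ∀ {x y t : ℝ}, 0 ≤ t → x ≤ L₀ * t → t ≤ y → x ≤ L * y := by
    intro x y t ht hx hty
    calc x ≤ L₀ * t := hx
      _ ≤ L * t := mul_le_mul_of_nonneg_right (le_abs_self _) ht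
      _ ≤ L * y := mul_le_mul_of_nonneg_left hty hL0
  by_cases hne : (DSE a b d).Nonempty
  swap
  · exact ⟨0, fun z hz => (hne ⟨z, hz⟩).elim⟩
  obtain ⟨z₀, hz₀⟩ := hne
  have hMu0 : 0 ≤ Mu := (norm_nonneg _).trans (hMu z₀ hz₀)
  have hMk0 : 0 ≤ Mk := (norm_nonneg _).trans (hMk z₀ hz₀ z₀ hz₀)
  have hfd : ∀ z ∈ DSE a b d, DifferentiableOn ℂ (fun w => k z w * u w) (DSE a b d) :=
    fun z hz => (hk_an2 z hz).mul hu_an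
  have hfM : ∀ z ∈ DSE a b d, ∀ w ∈ DSE a b d, ‖k z w * u w‖ ≤ Mk * Mu := by
    intro z hz w hw
    rw [norm_mul]
    exact mul_le_mul (hMk z hz w hw) (hMu w hw) (norm_nonneg _) hMk0
  -- `H x z` is the integral of `k x · u` along the segment from `a` to `z`.
  set H : ℂ → ℂ → ℂ := fun x z => (z - (a : ℂ)) *
    ∫ σ in (0:ℝ)..1, k x ((a : ℂ) + (σ : ℂ) * (z - (a : ℂ))) * u ((a : ℂ) + (σ : ℂ) * (z - (a : ℂ)))
    with hH
  have hHd : ∀ x ∈ DSE a b d, ∀ z ∈ DSE a b d, HasDerivAt (H x) (k x z * u z) z :=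
    fun x hx z hz => hasDerivAt_segment_integral hopen hstara (hfd x hx) (hfM x hx) hz
  have hHbd : ∀ z ∈ DSE a b d, ‖H z z‖ ≤ Mk * Mu * ‖z - (a : ℂ)‖ := by
    intro z hz
    rw [hH]
    simp only [norm_mul]
    rw [mul_comm]
    apply mul_le_mul_of_nonneg_right _ (norm_nonneg _)
    refine (intervalIntegral.norm_integral_le_of_norm_le_const (C := Mk * Mu) ?_).trans
      (by simp)
    intro σ hσ
    rw [Set.uIoc_of_le zero_le_one] at hσ
    exact hfM z hz _ (hstara z hz σ hσ)
  have hmid : ∀ {x y w : ℂ} {t r s : ℝ}, ‖x - w‖ ≤ t → ‖y - w‖ ≤ r → t + r ≤ s →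
      ‖x - y‖ ≤ s := by
    intro x y w t r s h1 h2 h3
    calc ‖x - y‖ = ‖(x - w) - (y - w)‖ := by congr 1; ring
      _ ≤ ‖x - w‖ + ‖y - w‖ := norm_sub_le _ _
      _ ≤ s := by linarith
  have hmid' : ∀ {x y w : ℂ} {t r s : ℝ}, ‖w - x‖ ≤ t → ‖w - y‖ ≤ r → t + r ≤ s →
      ‖x - y‖ ≤ s := by
    intro x y w t r s h1 h2 h3
    exact hmid (by rwa [norm_sub_rev]) (by rwa [norm_sub_rev]) h3
  -- Near `a`: compare `z` with `y = a + σ (z - a)` and let `σ → 0`.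
  have hA : ∀ z ∈ DSE a b d, ‖u z - u (a : ℂ)‖ ≤
      (2 * L + 2 * (Mk * Mu) * C) * ‖z - (a : ℂ)‖ ^ α := by
    intro z hz
    have hest : ∀ σ ∈ Set.Ioc (0:ℝ) 1, ‖u z - u ((a : ℂ) + (σ : ℂ) * (z - (a : ℂ)))‖ ≤
        (2 * L + 2 * (Mk * Mu) * C) * ‖z - (a : ℂ)‖ ^ α := by
      intro σ hσ
      have hy := hstara z hz σ hσ
      set y : ℂ := (a : ℂ) + (σ : ℂ) * (z - (a : ℂ)) with hydef
      have hya : ‖y - (a : ℂ)‖ ≤ ‖z - (a : ℂ)‖ := by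
        have : y - (a : ℂ) = (σ : ℂ) * (z - a) := by rw [hydef]; ring
        rw [this, norm_mul, Complex.norm_real, Real.norm_of_nonneg hσ.1.le]
        exact mul_le_of_le_one_left (norm_nonneg _) hσ.2
      have hyp : ‖y - (a : ℂ)‖ ^ α ≤ ‖z - (a : ℂ)‖ ^ α :=
        Real.rpow_le_rpow (norm_nonneg _) hya hα.le
      have hg : ‖g z - g y‖ ≤ 2 * L * ‖z - (a : ℂ)‖ ^ α :=
        hmid (hup (by positivity) (hL₀ z hz).1 le_rfl) (hup (by positivity) (hL₀ y hy).1 hyp)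
          (by linarith)
      have hHz := hHbd z hz
      have hHy : ‖H y y‖ ≤ Mk * Mu * ‖z - (a : ℂ)‖ :=
        (hHbd y hy).trans (mul_le_mul_of_nonneg_left hya (by positivity))
      have hp := mul_le_mul_of_nonneg_left (hpow _ (norm_nonneg (z - (a : ℂ))) (hDB z hz).1)
        (mul_nonneg hMk0 hMu0)
      have e1 : u z = g z + H z z := heq z (Or.inl hz)
      have e2 : u y = g y + H y y := heq y (Or.inl hy)
      calc ‖u z - u y‖ = ‖(g z - g y) + (H z z - H y y)‖ := by
            rw [e1, e2]; congr 1; ring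
        _ ≤ ‖g z - g y‖ + (‖H z z‖ + ‖H y y‖) :=
            (norm_add_le _ _).trans (add_le_add_right (norm_sub_le _ _) _)
        _ ≤ _ := by linarith
    have hlim : Filter.Tendsto (fun σ : ℝ => (a : ℂ) + (σ : ℂ) * (z - (a : ℂ)))
        (nhdsWithin 0 (Set.Ioi 0)) (nhdsWithin (a : ℂ) (DSE a b d)) := by
      apply tendsto_nhdsWithin_of_tendsto_nhds_of_eventually_within
      · have : Continuous (fun σ : ℝ => (a : ℂ) + (σ : ℂ) * (z - (a : ℂ))) := by fun_prop
        simpa using (this.tendsto 0).mono_left nhdsWithin_le_nhds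
      · filter_upwards [Ioc_mem_nhdsGT (zero_lt_one' ℝ)] with σ hσ
        exact hstara z hz σ hσ
    refine le_of_tendsto ((hu_lima.comp hlim).const_sub (u z)).norm ?_
    filter_upwards [Ioc_mem_nhdsGT (zero_lt_one' ℝ)] with σ hσ
    exact hest σ hσ
  -- Near `b`: compare `z` with `y = z + σ (b - z)` and let `σ → 1`.
  have hBb : ∀ z ∈ DSE a b d, ‖u (b : ℂ) - u z‖ ≤
      (2 * L + B * (2 * L * Mu) + Mk * Mu * C) * ‖(b : ℂ) - z‖ ^ α := by
    intro z hz
    have hest : ∀ σ ∈ Set.Ico (0:ℝ) 1, ‖u (z + (σ : ℂ) * ((b : ℂ) - z)) - u z‖ ≤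
        (2 * L + B * (2 * L * Mu) + Mk * Mu * C) * ‖(b : ℂ) - z‖ ^ α := by
      intro σ hσ
      have hy := hstarb z hz σ hσ
      have hyseg : segment ℝ z (z + (σ : ℂ) * ((b : ℂ) - z)) ⊆ DSE a b d := by
        rw [segment_eq_image']
        rintro _ ⟨t, ht, rfl⟩
        have := hstarb z hz (t * σ) ⟨mul_nonneg ht.1 hσ.1,
          (mul_le_of_le_one_left hσ.1 ht.2).trans_lt hσ.2⟩
        convert this using 1
        simp only [Complex.real_smul]
        push_cast
        ring
      have hyz : ‖(z + (σ : ℂ) * ((b : ℂ) - z)) - z‖ ≤ ‖(b : ℂ) - z‖ := by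
        rw [add_sub_cancel_left, norm_mul, Complex.norm_real, Real.norm_of_nonneg hσ.1]
        exact mul_le_of_le_one_left (norm_nonneg _) hσ.2.le
      have hyb : ‖(b : ℂ) - (z + (σ : ℂ) * ((b : ℂ) - z))‖ ≤ ‖(b : ℂ) - z‖ := by
        have : (b : ℂ) - (z + (σ : ℂ) * ((b : ℂ) - z)) = ((1 - σ : ℝ) : ℂ) * (b - z) := by
          push_cast; ring
        rw [this, norm_mul, Complex.norm_real, Real.norm_of_nonneg (by linarith [hσ.2])]
        exact mul_le_of_le_one_left (norm_nonneg _) (by linarith [hσ.1])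
      set y : ℂ := z + (σ : ℂ) * ((b : ℂ) - z) with hydef
      have hyp : ‖(b : ℂ) - y‖ ^ α ≤ ‖(b : ℂ) - z‖ ^ α :=
        Real.rpow_le_rpow (norm_nonneg _) hyb hα.le
      have hg : ‖g y - g z‖ ≤ 2 * L * ‖(b : ℂ) - z‖ ^ α :=
        hmid' (hup (by positivity) (hL₀ y hy).2.1 hyp) (hup (by positivity) (hL₀ z hz).2.1 le_rfl)
          (by linarith)
      have hk : ∀ w ∈ DSE a b d, ‖k y w - k z w‖ ≤ 2 * L * ‖(b : ℂ) - z‖ ^ α := fun w hw =>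
        hmid' (hup (by positivity) ((hL₀ y hy).2.2 w hw).2 hyp)
          (hup (by positivity) ((hL₀ z hz).2.2 w hw).2 le_rfl) (by linarith)
      have hH1 : ‖H y y - H z y‖ ≤ B * (2 * L * ‖(b : ℂ) - z‖ ^ α * Mu) := by
        have hi1 := line_intervalIntegrable (hstara y hy) (hfd y hy).continuousOn (hfM y hy)
        have hi2 := line_intervalIntegrable (hstara y hy) (hfd z hz).continuousOn (hfM z hz)
        rw [hH]
        simp only
        rw [← mul_sub, ← intervalIntegral.integral_sub hi1 hi2, norm_mul]
        refine mul_le_mul (hDB y hy).1 ?_ (norm_nonneg _) hB0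
        refine (intervalIntegral.norm_integral_le_of_norm_le_const
          (C := 2 * L * ‖(b : ℂ) - z‖ ^ α * Mu) ?_).trans (by simp)
        intro τ hτ
        rw [Set.uIoc_of_le zero_le_one] at hτ
        have hw := hstara y hy τ hτ
        rw [← sub_mul, norm_mul]
        exact mul_le_mul (hk _ hw) (hMu _ hw) (norm_nonneg _) (by positivity)
      -- `H z` is a primitive, so the mean value inequality replaces the Cauchy theorem
      -- on the triangle `a`, `z`, `y`.
      have hH2 : ‖H z y - H z z‖ ≤ Mk * Mu * ‖(b : ℂ) - z‖ := by
        refine ((convex_segment z y).norm_image_sub_le_of_norm_hasDerivWithin_le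
          (fun x hx => (hHd z hz x (hyseg hx)).hasDerivWithinAt)
          (fun x hx => hfM z hz x (hyseg hx))
          (left_mem_segment ℝ z y) (right_mem_segment ℝ z y)).trans ?_
        exact mul_le_mul_of_nonneg_left hyz (mul_nonneg hMk0 hMu0)
      have hp := mul_le_mul_of_nonneg_left (hpow _ (norm_nonneg ((b : ℂ) - z)) (hDB z hz).2)
        (mul_nonneg hMk0 hMu0)
      have e1 : u z = g z + H z z := heq z (Or.inl hz)
      have e2 : u y = g y + H y y := heq y (Or.inl hy)
      calc ‖u y - u z‖ = ‖(g y - g z) + (H y y - H z y) + (H z y - H z z)‖ := by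
            rw [e1, e2]; congr 1; ring
        _ ≤ ‖g y - g z‖ + ‖H y y - H z y‖ + ‖H z y - H z z‖ := norm_add₃_le
        _ ≤ _ := by linarith
    have hlim : Filter.Tendsto (fun σ : ℝ => z + (σ : ℂ) * ((b : ℂ) - z))
        (nhdsWithin 1 (Set.Iio 1)) (nhdsWithin (b : ℂ) (DSE a b d)) := by
      apply tendsto_nhdsWithin_of_tendsto_nhds_of_eventually_within
      · have : Continuous (fun σ : ℝ => z + (σ : ℂ) * ((b : ℂ) - z)) := by fun_prop
        simpa using (this.tendsto 1).mono_left nhdsWithin_le_nhds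
      · filter_upwards [Ico_mem_nhdsLT (zero_lt_one' ℝ)] with σ hσ
        exact hstarb z hz σ hσ
    refine le_of_tendsto ((hu_limb.comp hlim).sub_const (u z)).norm ?_
    filter_upwards [Ico_mem_nhdsLT (zero_lt_one' ℝ)] with σ hσ
    exact hest σ hσ
  refine ⟨max (2 * L + 2 * (Mk * Mu) * C) (2 * L + B * (2 * L * Mu) + Mk * Mu * C),
    fun z hz => ⟨(hA z hz).trans ?_, (hBb z hz).trans ?_⟩⟩
  · exact mul_le_mul_of_nonneg_right (le_max_left _ _) (by positivity)
  · exact mul_le_mul_of_nonneg_right (le_max_right _ _) (by positivity)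

end

end SincVolterra
end

section
/- Let k be continuous on [a,b]×[a,b] and g ∈ C([a,b]). The following two statements are equivalent: (A) there exists a unique u_N^SE ∈ C([a,b]) satisfying u_N^SE = g + V_N^SE[u_N^SE]; (B) there exists a unique v ∈ C([a,b]) satisfying v = P_N^SE(g + V_N^SE[v]). Moreover, when these hold, v = P_N^SE u_N^SE. -/
/-!
Both equations only see the values of the unknown at the nodes `t_j`. The operator `P_N`
interpolates at the nodes (`PNSE_node`), and `P_N f` and `V_N f` depend on `f` only through its node
values (`PNSE_congr`, `VNSE_congr`). Hence `u ↦ P_N u` sends solutions of `u = g + V_N u` to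
solutions of `v = P_N (g + V_N v)`, and `v ↦ g + V_N v` goes back; the two maps are mutually
inverse on solutions, so existence and uniqueness transfer.

What remains is that both maps land in `C([a, b])`. For `P_N f` this is the decay of the sinc
function at infinity; for `V_N f` it is `Si x → ± π / 2` as `x → ± ∞` (`tendsto_Si_atTop`), that is,
the Dirichlet integral. The latter is obtained from the function
`F x = ∫₀^∞ exp (-x s) (cos x + s sin x) / (1 + s²) ds` (`auxF`), which satisfies
`F' x = - sin x / x` on `(0, ∞)`, `F (0+) = π / 2` and `F (∞) = 0`.
-/

namespace SincVolterra

noncomputable section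

/-- The Nyström-type fixed point equation `u = g + V_N^SE u` on `[a,b]`. -/
def ApredSE (a b h : ℝ) (N : ℕ) (k : ℝ → ℝ → ℂ) (g : ℝ → ℂ) (f : ℝ → ℂ) : Prop :=
  ContinuousOn f (Set.Icc a b) ∧ ∀ t ∈ Set.Icc a b, f t = g t + VNSE a b h N k f t

/-- The collocation fixed point equation `v = P_N^SE (g + V_N^SE v)` on `[a,b]`. -/
def BpredSE (a b h : ℝ) (N : ℕ) (k : ℝ → ℝ → ℂ) (g : ℝ → ℂ) (v : ℝ → ℂ) : Prop :=
  ContinuousOn v (Set.Icc a b) ∧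
    ∀ t ∈ Set.Icc a b, v t = PNSE a b h N (fun s => g s + VNSE a b h N k v s) t

open Filter Topology MeasureTheory

/-! ### The sine integral and its limits -/

lemma Si_eq_integral_sinc (x : ℝ) : Si x = ∫ τ in (0:ℝ)..x, Real.sinc τ := by
  unfold Si
  apply intervalIntegral.integral_congr_ae
  have h0 : ∀ᵐ τ : ℝ, τ ≠ 0 := by
    simp [ae_iff]
  filter_upwards [h0] with τ hτ _
  rw [Real.sinc_of_ne_zero hτ]

lemma hasDerivAt_Si (x : ℝ) : HasDerivAt Si (Real.sinc x) x := by
  have : Si = fun x => ∫ τ in (0:ℝ)..x, Real.sinc τ := funext Si_eq_integral_sinc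
  rw [this]
  exact intervalIntegral.integral_hasDerivAt_right
    (Real.continuous_sinc.intervalIntegrable _ _)
    (Real.continuous_sinc.stronglyMeasurableAtFilter _ _)
    Real.continuous_sinc.continuousAt

lemma continuous_Si : Continuous Si :=
  continuous_iff_continuousAt.2 fun x => (hasDerivAt_Si x).continuousAt

lemma Si_neg (x : ℝ) : Si (-x) = -Si x := by
  rw [Si_eq_integral_sinc, Si_eq_integral_sinc]
  have := intervalIntegral.integral_comp_neg (a := 0) (b := x) Real.sinc
  simp only [Real.sinc_neg, neg_zero] at this
  rw [this, intervalIntegral.integral_symm]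

/-- The integrand of the auxiliary function `auxF`; its `x`-derivative is `-exp (-x s) sin x`. -/
def auxf (x s : ℝ) : ℝ :=
  Real.exp (-x * s) * (Real.cos x + s * Real.sin x) * (1 + s ^ 2)⁻¹

/-- The auxiliary function `x ↦ ∫₀^∞ exp (-x s) (cos x + s sin x) / (1 + s²) ds`, which
coincides with `π / 2 - Si x` for `x > 0`. -/
def auxF (x : ℝ) : ℝ := ∫ s in Set.Ioi (0:ℝ), auxf x s

lemma continuous_auxf (x : ℝ) : Continuous (auxf x) := by
  unfold auxf
  have : ∀ s : ℝ, 1 + s ^ 2 ≠ 0 := fun s => by positivity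
  fun_prop (disch := assumption)

/-- A bound uniform in `x > 0`, which serves as the dominating function at both ends. -/
lemma abs_auxf_le {x s : ℝ} (hx : 0 < x) (hs : 0 < s) : |auxf x s| ≤ 2 * (1 + s ^ 2)⁻¹ := by
  have h1 : |Real.exp (-x * s) * (Real.cos x + s * Real.sin x)| ≤ 2 := by
    have hsin : |Real.sin x| ≤ x := by
      simpa [abs_of_pos hx] using Real.abs_sin_le_abs (x := x)
    have hy : x * s + 1 ≤ Real.exp (x * s) := Real.add_one_le_exp _
    have hxs : 0 < x * s := mul_pos hx hs
    have he : Real.exp (-x * s) * Real.exp (x * s) = 1 := by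
      rw [← Real.exp_add]; simp
    have hc : |Real.cos x + s * Real.sin x| ≤ 1 + x * s := by
      refine (abs_add_le _ _).trans ?_
      rw [abs_mul, abs_of_pos hs]
      nlinarith [Real.abs_cos_le_one x]
    rw [abs_mul, abs_of_pos (Real.exp_pos _)]
    have hp := Real.exp_pos (-x * s)
    nlinarith
  unfold auxf
  rw [abs_mul, abs_of_pos (show 0 < (1 + s ^ 2)⁻¹ by positivity)]
  gcongr

lemma integrableOn_bound :
    IntegrableOn (fun s : ℝ => 2 * (1 + s ^ 2)⁻¹) (Set.Ioi 0) :=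
  (integrable_inv_one_add_sq.const_mul 2).integrableOn

lemma integrableOn_auxf {x : ℝ} (hx : 0 < x) : IntegrableOn (auxf x) (Set.Ioi 0) := by
  refine Integrable.mono' integrableOn_bound (continuous_auxf x).aestronglyMeasurable ?_
  filter_upwards [ae_restrict_mem measurableSet_Ioi] with s hs
  exact abs_auxf_le hx hs

lemma hasDerivAt_auxf (x s : ℝ) :
    HasDerivAt (fun y => auxf y s) (-(Real.exp (-x * s) * Real.sin x)) x := by
  unfold auxf
  have h1 : HasDerivAt (fun y : ℝ => Real.exp (-y * s)) (Real.exp (-x * s) * (-1 * s)) x :=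
    (((hasDerivAt_id x).neg).mul_const s).exp
  have h2 : HasDerivAt (fun y : ℝ => Real.cos y + s * Real.sin y)
      (-Real.sin x + s * Real.cos x) x :=
    (Real.hasDerivAt_cos x).add ((Real.hasDerivAt_sin x).const_mul s)
  refine ((h1.mul h2).mul_const _).congr_deriv ?_
  have : 1 + s ^ 2 ≠ 0 := by positivity
  field_simp
  ring

lemma hasDerivAt_auxF {x : ℝ} (hx : 0 < x) : HasDerivAt auxF (-Real.sinc x) x := by
  have key := hasDerivAt_integral_of_dominated_loc_of_deriv_le
    (μ := volume.restrict (Set.Ioi (0:ℝ))) (F := auxf)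
    (F' := fun y s => -(Real.exp (-y * s) * Real.sin y)) (x₀ := x)
    (s := Set.Ioi (x / 2)) (bound := fun s => Real.exp (-(x / 2) * s))
    (Ioi_mem_nhds (by linarith))
    (Filter.Eventually.of_forall fun y => (continuous_auxf y).aestronglyMeasurable)
    (integrableOn_auxf hx)
    (by
      have : Continuous fun s => -(Real.exp (-x * s) * Real.sin x) := by fun_prop
      exact this.aestronglyMeasurable)
    (by
      filter_upwards [ae_restrict_mem measurableSet_Ioi] with s hs y hy
      have hs' : 0 < s := hs
      have hy' : x / 2 < y := hy
      rw [norm_neg, norm_mul, Real.norm_eq_abs, Real.norm_eq_abs, abs_of_pos (Real.exp_pos _)]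
      have : Real.exp (-y * s) ≤ Real.exp (-(x / 2) * s) :=
        Real.exp_le_exp.2 (by nlinarith)
      nlinarith [Real.abs_sin_le_one y, Real.exp_pos (-y * s), abs_nonneg (Real.sin y)])
    (integrableOn_exp_mul_Ioi (by linarith) 0)
    (Filter.Eventually.of_forall fun s y _ => hasDerivAt_auxf y s)
  refine key.2.congr_deriv ?_
  rw [integral_neg, integral_mul_const, integral_exp_mul_Ioi (by linarith) 0,
    Real.sinc_of_ne_zero hx.ne']
  simp
  field_simp

lemma tendsto_auxF_atTop : Tendsto auxF atTop (𝓝 0) := by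
  have : Tendsto auxF atTop (𝓝 (∫ s in Set.Ioi (0:ℝ), (0:ℝ))) := by
    refine tendsto_integral_filter_of_dominated_convergence (fun s : ℝ => 2 * (1 + s ^ 2)⁻¹)
      (Filter.Eventually.of_forall fun y => (continuous_auxf y).aestronglyMeasurable) ?_
      integrableOn_bound ?_
    · filter_upwards [eventually_gt_atTop 0] with x hx
      filter_upwards [ae_restrict_mem measurableSet_Ioi] with s hs
      exact abs_auxf_le hx hs
    · filter_upwards [ae_restrict_mem measurableSet_Ioi] with s hs
      have hs' : 0 < s := hs
      have he : Tendsto (fun x : ℝ => Real.exp (-x * s) * ((1 + s) * (1 + s ^ 2)⁻¹)) atTop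
          (𝓝 0) := by
        have h1 : Tendsto (fun x : ℝ => -x * s) atTop atBot :=
          tendsto_neg_atTop_atBot.atBot_mul_const hs'
        simpa using (Real.tendsto_exp_atBot.comp h1).mul_const ((1 + s) * (1 + s ^ 2)⁻¹)
      refine squeeze_zero_norm (fun x => ?_) he
      unfold auxf
      rw [Real.norm_eq_abs, abs_mul, abs_mul, abs_of_pos (Real.exp_pos _),
        abs_of_pos (show 0 < (1 + s ^ 2)⁻¹ by positivity), mul_assoc]
      gcongr
      refine (abs_add_le _ _).trans ?_
      rw [abs_mul, abs_of_pos hs']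
      nlinarith [Real.abs_cos_le_one x, Real.abs_sin_le_one x]
  simpa using this

lemma tendsto_auxF_zero : Tendsto auxF (𝓝[>] 0) (𝓝 (Real.pi / 2)) := by
  have : Tendsto auxF (𝓝[>] 0) (𝓝 (∫ s in Set.Ioi (0:ℝ), (1 + s ^ 2)⁻¹)) := by
    refine tendsto_integral_filter_of_dominated_convergence (fun s : ℝ => 2 * (1 + s ^ 2)⁻¹)
      (Filter.Eventually.of_forall fun y => (continuous_auxf y).aestronglyMeasurable) ?_
      integrableOn_bound ?_
    · filter_upwards [self_mem_nhdsWithin] with x hx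
      filter_upwards [ae_restrict_mem measurableSet_Ioi] with s hs
      exact abs_auxf_le hx hs
    · refine Filter.Eventually.of_forall fun s => ?_
      have hc : Continuous fun x => auxf x s := by unfold auxf; fun_prop
      have := hc.tendsto 0
      simp only [auxf, neg_zero, zero_mul, Real.exp_zero, Real.cos_zero, Real.sin_zero, mul_zero,
        add_zero, one_mul] at this
      exact this.mono_left nhdsWithin_le_nhds
  simpa using this

/-- The Dirichlet integral `∫₀^∞ sin τ / τ dτ = π / 2`: the sum `Si + auxF` is constant on
`(0, ∞)`, and comparing its limits at `0` and at `∞` gives the value. -/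
lemma tendsto_Si_atTop : Tendsto Si atTop (𝓝 (Real.pi / 2)) := by
  have hd : ∀ x ∈ Set.Ioi (0:ℝ), HasDerivAt (fun y => Si y + auxF y) 0 x := fun x hx => by
    exact ((hasDerivAt_Si x).add (hasDerivAt_auxF hx)).congr_deriv (add_neg_cancel _)
  obtain ⟨c, hc⟩ := isOpen_Ioi.exists_is_const_of_deriv_eq_zero isPreconnected_Ioi
    (fun x hx => (hd x hx).differentiableAt.differentiableWithinAt) (fun x hx => (hd x hx).deriv)
  have h0 : Tendsto (fun y => Si y + auxF y) (𝓝[>] 0) (𝓝 (Real.pi / 2)) := by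
    have := ((continuous_Si.tendsto 0).mono_left nhdsWithin_le_nhds).add tendsto_auxF_zero
    simpa [Si] using this
  have hcv : c = Real.pi / 2 := by
    refine tendsto_nhds_unique (tendsto_const_nhds.congr' ?_) h0
    filter_upwards [self_mem_nhdsWithin] with x hx using (hc x hx).symm
  have : Tendsto (fun y => c - auxF y) atTop (𝓝 (c - 0)) :=
    tendsto_const_nhds.sub tendsto_auxF_atTop
  rw [sub_zero, hcv] at this
  refine this.congr' ?_
  filter_upwards [eventually_gt_atTop 0] with x hx
  have := hc x hx
  linarith

lemma tendsto_Si_atBot : Tendsto Si atBot (𝓝 (-(Real.pi / 2))) := by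
  have := (tendsto_Si_atTop.comp tendsto_neg_atBot_atTop).neg
  refine this.congr fun x => ?_
  simp [Si_neg]

/-! ### The sinc basis -/

lemma tendsto_sinc_cocompact : Tendsto Real.sinc (cocompact ℝ) (𝓝 0) := by
  have h : Tendsto (fun x : ℝ => |x|⁻¹) (cocompact ℝ) (𝓝 0) :=
    tendsto_inv_atTop_zero.comp tendsto_norm_cocompact_atTop
  refine squeeze_zero_norm' ?_ h
  filter_upwards [(isCompact_singleton (x := (0:ℝ))).compl_mem_cocompact] with x hx
  have hx' : x ≠ 0 := hx
  rw [Real.sinc_of_ne_zero hx', Real.norm_eq_abs, abs_div, div_eq_mul_inv]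
  exact mul_le_of_le_one_left (by positivity) (Real.abs_sin_le_one x)

lemma sincF_eq_sinc (j : ℤ) {h : ℝ} (hh : 0 < h) (x : ℝ) :
    sincF j h x = Real.sinc (Real.pi * (x - j * h) / h) := by
  unfold sincF
  split_ifs with hx
  · simp [hx]
  · rw [Real.sinc_of_ne_zero]
    have := sub_ne_zero.2 hx
    have := Real.pi_ne_zero
    positivity

lemma sincF_node (i j : ℤ) {h : ℝ} (hh : 0 < h) :
    sincF j h (i * h) = if i = j then 1 else 0 := by
  unfold sincF
  have h1 : (i : ℝ) * h = j * h ↔ i = j := by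
    rw [mul_left_inj' hh.ne']; exact_mod_cast Iff.rfl
  simp only [h1]
  split_ifs with hij
  · rfl
  · have : Real.pi * ((i : ℝ) * h - j * h) / h = ((i - j : ℤ) : ℝ) * Real.pi := by
      push_cast; field_simp
    rw [this, Real.sin_int_mul_pi, zero_div]

/-! ### Continuous extension to the endpoints -/

lemma tendsto_scale_atTop (j : ℤ) {h : ℝ} (hh : 0 < h) :
    Tendsto (fun x : ℝ => Real.pi * (x - j * h) / h) atTop atTop :=
  ((tendsto_atTop_add_const_right _ _ tendsto_id).const_mul_atTop Real.pi_pos).atTop_div_const hh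

lemma tendsto_scale_atBot (j : ℤ) {h : ℝ} (hh : 0 < h) :
    Tendsto (fun x : ℝ => Real.pi * (x - j * h) / h) atBot atBot :=
  ((tendsto_atBot_add_const_right _ _ tendsto_id).const_mul_atBot Real.pi_pos).atBot_div_const hh

lemma tendsto_phiSE_left {a b : ℝ} (hab : a < b) :
    Tendsto (phiSE a b) (𝓝[>] a) atBot := by
  refine Real.tendsto_log_nhdsGT_zero.comp (tendsto_nhdsWithin_iff.2 ⟨?_, ?_⟩)
  · have : ContinuousAt (fun t => (t - a) / (b - t)) a :=
      ContinuousAt.div (by fun_prop) (by fun_prop) (by linarith)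
    have := this.tendsto.mono_left (nhdsWithin_le_nhds (s := Set.Ioi a))
    simpa using this
  · filter_upwards [Ioo_mem_nhdsGT hab] with t ht
    exact div_pos (sub_pos.2 ht.1) (sub_pos.2 ht.2)

lemma tendsto_phiSE_right {a b : ℝ} (hab : a < b) :
    Tendsto (phiSE a b) (𝓝[<] b) atTop := by
  refine Real.tendsto_log_atTop.comp ?_
  have h1 : Tendsto (fun t => t - a) (𝓝[<] b) (𝓝 (b - a)) :=
    (Continuous.tendsto (by fun_prop) b).mono_left nhdsWithin_le_nhds
  have h2 : Tendsto (fun t => (b - t)⁻¹) (𝓝[<] b) atTop := by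
    refine tendsto_inv_nhdsGT_zero.comp (tendsto_nhdsWithin_iff.2 ⟨?_, ?_⟩)
    · have : Tendsto (fun t => b - t) (𝓝[<] b) (𝓝 (b - b)) :=
        (Continuous.tendsto (by fun_prop) b).mono_left nhdsWithin_le_nhds
      simpa using this
    · filter_upwards [self_mem_nhdsWithin] with t ht
      exact sub_pos.2 (Set.mem_Iio.1 ht)
  exact h1.pos_mul_atTop (sub_pos.2 hab) h2

/-- A continuous function on `ℝ` with limits at `±∞`, pulled back to `(a, b)` by `phiSE` and
extended by its limits, is continuous. -/
lemma continuous_ext {a b A B : ℝ} (hab : a < b) {f : ℝ → ℝ} (hf : Continuous f)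
    (hA : Tendsto f atBot (𝓝 A)) (hB : Tendsto f atTop (𝓝 B)) :
    Continuous fun t => if t ≤ a then A else if b ≤ t then B else f (phiSE a b t) := by
  set F : ℝ → ℝ := fun t => if t ≤ a then A else if b ≤ t then B else f (phiSE a b t) with hF
  have hmid : ∀ t ∈ Set.Ioo a b, f (phiSE a b t) = F t := fun t ht => by
    simp [hF, not_le.2 ht.1, not_le.2 ht.2]
  have hlow : ∀ t ≤ a, A = F t := fun t ht => by simp [hF, ht]
  have hhigh : ∀ t, b ≤ t → B = F t := fun t ht => by
    simp [hF, ht, not_le.2 (hab.trans_le ht)]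
  rw [continuous_iff_continuousAt]
  intro t
  rcases lt_trichotomy t a with h | h | h
  · exact continuousAt_const.congr
      (by filter_upwards [Iio_mem_nhds h] with s hs using hlow s (le_of_lt hs))
  · subst h
    rw [ContinuousAt, ← nhdsLE_sup_nhdsGT, ← hlow t le_rfl]
    refine Tendsto.sup (tendsto_const_nhds.congr' ?_)
      ((hA.comp (tendsto_phiSE_left hab)).congr' ?_)
    · filter_upwards [self_mem_nhdsWithin] with s hs using hlow s hs
    · filter_upwards [Ioo_mem_nhdsGT hab] with s hs using hmid s hs
  rcases lt_trichotomy t b with h' | h' | h'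
  · have hpos : (t - a) / (b - t) ≠ 0 := (div_pos (sub_pos.2 h) (sub_pos.2 h')).ne'
    have hphi : ContinuousAt (phiSE a b) t :=
      ContinuousAt.log (ContinuousAt.div (by fun_prop) (by fun_prop) (by linarith)) hpos
    exact (hf.continuousAt.comp hphi).congr
      (by filter_upwards [Ioo_mem_nhds h h'] with s hs using hmid s hs)
  · subst h'
    rw [ContinuousAt, ← nhdsLT_sup_nhdsGE, ← hhigh t le_rfl]
    refine Tendsto.sup ((hB.comp (tendsto_phiSE_right hab)).congr' ?_)
      (tendsto_const_nhds.congr' ?_)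
    · filter_upwards [Ioo_mem_nhdsLT hab] with s hs using hmid s hs
    · filter_upwards [self_mem_nhdsWithin] with s hs using hhigh s hs
  · exact continuousAt_const.congr
      (by filter_upwards [Ioi_mem_nhds h'] with s hs using hhigh s (le_of_lt hs))

lemma continuous_JSEext {a b h : ℝ} (hab : a < b) (hh : 0 < h) (j : ℤ) :
    Continuous (JSEext a b h j) := by
  have hpi := Real.pi_ne_zero
  refine continuous_ext hab (f := Jfun j h) ?_ ?_ ?_
  · unfold Jfun
    have := continuous_Si
    fun_prop
  · have := (((tendsto_Si_atBot.comp (tendsto_scale_atBot j hh)).const_mul (1 / Real.pi)).const_add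
      (1 / 2)).const_mul h
    refine (this.congr fun x => rfl).trans (le_of_eq (congrArg 𝓝 ?_))
    field_simp
    ring
  · have := (((tendsto_Si_atTop.comp (tendsto_scale_atTop j hh)).const_mul (1 / Real.pi)).const_add
      (1 / 2)).const_mul h
    refine (this.congr fun x => rfl).trans (le_of_eq (congrArg 𝓝 ?_))
    field_simp
    ring

/-! ### Nodes, interpolation and continuity of the operators -/

lemma tSE_mem {a b : ℝ} (hab : a < b) (h : ℝ) (j : ℤ) : tSE a b h j ∈ Set.Ioo a b := by
  unfold tSE psiSE
  have h1 := Real.tanh_lt_one ((j : ℝ) * h / 2)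
  have h2 := Real.neg_one_lt_tanh ((j : ℝ) * h / 2)
  constructor <;> nlinarith

lemma phiSE_tSE {a b : ℝ} (hab : a < b) (h : ℝ) (j : ℤ) : phiSE a b (tSE a b h j) = j * h := by
  have hm := tSE_mem hab h j
  unfold phiSE
  have hne : b - tSE a b h j ≠ 0 := (sub_pos.2 hm.2).ne'
  have : (tSE a b h j - a) / (b - tSE a b h j) = Real.exp (j * h) := by
    rw [div_eq_iff hne]
    unfold tSE psiSE
    set x : ℝ := (j : ℝ) * h
    have hx : Real.exp x = Real.exp (x / 2) * Real.exp (x / 2) := by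
      rw [← Real.exp_add]; ring_nf
    have hi : Real.exp (x / 2) * Real.exp (-(x / 2)) = 1 := by
      rw [← Real.exp_add]; simp
    have hc := Real.cosh_pos (x / 2)
    rw [Real.tanh_eq_sinh_div_cosh, hx]
    field_simp
    rw [Real.sinh_eq, Real.cosh_eq]
    linear_combination ((a - b) * Real.exp (x / 2)) * hi
  rw [this, Real.log_exp]

/-- `P_N` interpolates at the nodes. -/
lemma PNSE_node {a b h : ℝ} (hab : a < b) (hh : 0 < h) (N : ℕ) (f : ℝ → ℂ) {i : ℤ}
    (hi : i ∈ Finset.Icc (-(N:ℤ)) (N:ℤ)) :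
    PNSE a b h N f (tSE a b h i) = f (tSE a b h i) := by
  have hm := tSE_mem hab h i
  unfold PNSE
  rw [if_neg (not_le.2 hm.1), if_neg (not_le.2 hm.2), phiSE_tSE hab,
    Finset.sum_eq_single_of_mem i hi]
  · simp [sincF_node i i hh]
  · intro j _ hj
    simp [sincF_node i j hh, hj.symm]

lemma PNSE_congr {a b h : ℝ} {N : ℕ} {f f' : ℝ → ℂ}
    (H : ∀ j ∈ Finset.Icc (-(N:ℤ)) (N:ℤ), f (tSE a b h j) = f' (tSE a b h j)) :
    PNSE a b h N f = PNSE a b h N f' := by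
  funext t
  unfold PNSE
  have h1 := H (-(N:ℤ)) (by simp)
  have h2 := H (N:ℤ) (by simp)
  rw [h1, h2, Finset.sum_congr rfl fun j hj => by rw [H j hj]]

lemma VNSE_congr {a b h : ℝ} {N : ℕ} (k : ℝ → ℝ → ℂ) {f f' : ℝ → ℂ}
    (H : ∀ j ∈ Finset.Icc (-(N:ℤ)) (N:ℤ), f (tSE a b h j) = f' (tSE a b h j)) :
    VNSE a b h N k f = VNSE a b h N k f' := by
  funext t
  exact Finset.sum_congr rfl fun j hj => by rw [H j hj]

lemma continuousOn_PNSE {a b h : ℝ} (hab : a < b) (hh : 0 < h) (N : ℕ) (f : ℝ → ℂ) :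
    ContinuousOn (PNSE a b h N f) (Set.Icc a b) := by
  have hs : ∀ j : ℤ, Continuous fun t =>
      if t ≤ a then (0:ℝ) else if b ≤ t then 0 else sincF j h (phiSE a b t) := fun j => by
    have e : sincF j h = fun x => Real.sinc (Real.pi * (x - j * h) / h) :=
      funext (sincF_eq_sinc j hh)
    refine continuous_ext hab (f := sincF j h) ?_ ?_ ?_
    · rw [e]
      exact Real.continuous_sinc.comp (by fun_prop)
    · rw [e]
      exact (tendsto_sinc_cocompact.mono_left atBot_le_cocompact).comp (tendsto_scale_atBot j hh)
    · rw [e]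
      exact (tendsto_sinc_cocompact.mono_left atTop_le_cocompact).comp (tendsto_scale_atTop j hh)
  have hA : Continuous (omA a b) := by unfold omA; fun_prop
  have hB : Continuous (omB a b) := by unfold omB; fun_prop
  -- On `[a, b]`, `P_N f` is the interior formula with each sinc term extended by `0`.
  have hcont : Continuous fun t => f (tSE a b h (-(N:ℤ))) * ((omA a b t : ℝ) : ℂ)
      + f (tSE a b h (N:ℤ)) * ((omB a b t : ℝ) : ℂ)
      + ∑ j ∈ Finset.Icc (-(N:ℤ)) (N:ℤ),
        (f (tSE a b h j) - f (tSE a b h (-(N:ℤ))) * ((omA a b (tSE a b h j) : ℝ) : ℂ)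
          - f (tSE a b h (N:ℤ)) * ((omB a b (tSE a b h j) : ℝ) : ℂ))
          * (((if t ≤ a then (0:ℝ) else if b ≤ t then 0 else sincF j h (phiSE a b t) : ℝ)) : ℂ) := by
    refine Continuous.add (by fun_prop) (continuous_finsetSum _ fun j _ => ?_)
    exact continuous_const.mul (Complex.continuous_ofReal.comp (hs j))
  refine hcont.continuousOn.congr fun t ht => ?_
  have hba : (b:ℂ) - a ≠ 0 := by
    rw [← Complex.ofReal_sub]; exact_mod_cast (sub_pos.2 hab).ne'
  rcases eq_or_lt_of_le ht.1 with h1 | h1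
  · subst h1
    simp [PNSE, omA, omB, hba]
  rcases eq_or_lt_of_le ht.2 with h2 | h2
  · subst h2
    simp [PNSE, omA, omB, hba, h1.not_ge]
  · simp only [PNSE, if_neg (not_le.2 h1), if_neg (not_le.2 h2)]

lemma continuousOn_VNSE {a b h : ℝ} (hab : a < b) (hh : 0 < h) (N : ℕ) {k : ℝ → ℝ → ℂ}
    (hk : ContinuousOn (Function.uncurry k) (Set.Icc a b ×ˢ Set.Icc a b)) (f : ℝ → ℂ) :
    ContinuousOn (VNSE a b h N k f) (Set.Icc a b) := by
  unfold VNSE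
  refine continuousOn_finsetSum _ fun j _ => ?_
  have hkj : ContinuousOn (fun t => k t (tSE a b h j)) (Set.Icc a b) :=
    hk.comp (f := fun t => (t, tSE a b h j)) (by fun_prop)
      fun t ht => ⟨ht, Set.Ioo_subset_Icc_self (tSE_mem hab h j)⟩
  exact ((hkj.mul continuousOn_const).mul continuousOn_const).mul
    (Complex.continuous_ofReal.comp (continuous_JSEext hab hh j)).continuousOn

/-! ### Passing between the two equations -/

/-- A solution of the Nyström equation is mapped by `P_N` to a solution of the collocation
equation. -/
lemma BpredSE_of_ApredSE {a b h : ℝ} {N : ℕ} (hab : a < b) (hh : 0 < h) {k : ℝ → ℝ → ℂ}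
    {g u : ℝ → ℂ} (hu : ApredSE a b h N k g u) : BpredSE a b h N k g (PNSE a b h N u) := by
  refine ⟨continuousOn_PNSE hab hh N u, fun t _ => ?_⟩
  rw [VNSE_congr k fun j hj => PNSE_node hab hh N u hj]
  exact congrFun (PNSE_congr fun j _ => hu.2 _ (Set.Ioo_subset_Icc_self (tSE_mem hab h j))) t

lemma BpredSE.node {a b h : ℝ} {N : ℕ} (hab : a < b) (hh : 0 < h) {k : ℝ → ℝ → ℂ}
    {g v : ℝ → ℂ} (hv : BpredSE a b h N k g v) {j : ℤ} (hj : j ∈ Finset.Icc (-(N:ℤ)) (N:ℤ)) :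
    g (tSE a b h j) + VNSE a b h N k v (tSE a b h j) = v (tSE a b h j) := by
  rw [hv.2 _ (Set.Ioo_subset_Icc_self (tSE_mem hab h j)), PNSE_node hab hh N _ hj]

/-- A solution `v` of the collocation equation yields the solution `g + V_N v` of the Nyström
equation. -/
lemma ApredSE_of_BpredSE {a b h : ℝ} {N : ℕ} (hab : a < b) (hh : 0 < h) {k : ℝ → ℝ → ℂ}
    {g v : ℝ → ℂ} (hk : ContinuousOn (Function.uncurry k) (Set.Icc a b ×ˢ Set.Icc a b))
    (hg : ContinuousOn g (Set.Icc a b)) (hv : BpredSE a b h N k g v) :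
    ApredSE a b h N k g (fun s => g s + VNSE a b h N k v s) := by
  refine ⟨hg.add (continuousOn_VNSE hab hh N hk v), fun t _ => ?_⟩
  rw [VNSE_congr (f := fun s => g s + VNSE a b h N k v s) (f' := v) k
    fun j hj => hv.node hab hh hj]

lemma eqOn_PNSE_of_unique {a b h : ℝ} {N : ℕ} (hab : a < b) (hh : 0 < h) {k : ℝ → ℝ → ℂ}
    {g u v : ℝ → ℂ} (hk : ContinuousOn (Function.uncurry k) (Set.Icc a b ×ˢ Set.Icc a b))
    (hg : ContinuousOn g (Set.Icc a b))
    (huniq : ∀ u', ApredSE a b h N k g u' → Set.EqOn u' u (Set.Icc a b))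
    (hv : BpredSE a b h N k g v) : Set.EqOn v (PNSE a b h N u) (Set.Icc a b) := by
  intro t ht
  rw [hv.2 t ht]
  have hE := huniq _ (ApredSE_of_BpredSE hab hh hk hg hv)
  exact congrFun (PNSE_congr fun j _ => hE (Set.Ioo_subset_Icc_self (tSE_mem hab h j))) t

/-- equivalence of unique solvability of the SE-Sinc-Nyström and
SE-Sinc-collocation equations, and `v = P_N^SE u_N^SE`. -/
theorem SE_Nystrom_collocation_equiv
    (a b h : ℝ) (N : ℕ) (hab : a < b) (hN : 0 < N) (hh : 0 < h)
    (k : ℝ → ℝ → ℂ) (g : ℝ → ℂ)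
    (hk : ContinuousOn (Function.uncurry k) (Set.Icc a b ×ˢ Set.Icc a b))
    (hg : ContinuousOn g (Set.Icc a b)) :
    ((∃ uN, ApredSE a b h N k g uN ∧
        ∀ u', ApredSE a b h N k g u' → Set.EqOn u' uN (Set.Icc a b)) ↔
      (∃ v, BpredSE a b h N k g v ∧
        ∀ v', BpredSE a b h N k g v' → Set.EqOn v' v (Set.Icc a b))) ∧
    (∀ uN v, ApredSE a b h N k g uN →
      (∀ u', ApredSE a b h N k g u' → Set.EqOn u' uN (Set.Icc a b)) →
      BpredSE a b h N k g v →
      Set.EqOn v (PNSE a b h N uN) (Set.Icc a b)) := by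
  refine ⟨⟨?_, ?_⟩, fun uN v _ huniq hv => eqOn_PNSE_of_unique hab hh hk hg huniq hv⟩
  · rintro ⟨u, hu, huniq⟩
    exact ⟨_, BpredSE_of_ApredSE hab hh hu,
      fun v' hv' => eqOn_PNSE_of_unique hab hh hk hg huniq hv'⟩
  · rintro ⟨v, hv, huniq⟩
    refine ⟨_, ApredSE_of_BpredSE hab hh hk hg hv, fun u' hu' t ht => ?_⟩
    have hE := huniq _ (BpredSE_of_ApredSE hab hh hu')
    have hnode : ∀ j ∈ Finset.Icc (-(N:ℤ)) (N:ℤ), u' (tSE a b h j) = v (tSE a b h j) :=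
      fun j hj => by
        rw [← PNSE_node hab hh N u' hj]
        exact hE (Set.Ioo_subset_Icc_self (tSE_mem hab h j))
    rw [hu'.2 t ht, VNSE_congr k hnode]

end

end SincVolterra
end
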